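/- Let n ≥ 1 and N = (N_0, …, N_n) ∈ ℤ^{n+1} with N_0 + ⋯ + N_n = 0, and let f be any point of the flow polytope F_n(N). Then K_n(N) ≥ (max_{0 ≤ k ≤ n−1} e^{h(s_k)}) · e^{−2 ∑_{k=0}^{n−1} h(s_k)} · e^{H(f)}. -/

import Mathlib

open Finset

/-- The entropy-like function `h(t) = (t+1)·log(t+1) − t·log t` (with `h 0 = 0`
since `Real.log 0 = 0`). -/
noncomputable def entH (t : ℝ) : ℝ := (t + 1) * Real.log (t + 1) - t * Real.log t

/-- `f` is an integer flow on the complete graph `k_{n+1}` with netflow `N`: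
`f i j` is the flow on the edge `(i,j)` for `i < j`, it vanishes for `i ≥ j`,
and the netflow at each vertex `i` is `N i`. -/
def IsIntFlow (n : ℕ) (N : Fin (n + 1) → ℤ) (f : Fin (n + 1) → Fin (n + 1) → ℕ) : Prop :=
  (∀ i j : Fin (n + 1), ¬ i < j → f i j = 0) ∧
  ∀ i : Fin (n + 1),
    (∑ j : Fin (n + 1), if i < j then (f i j : ℤ) else 0) -
      (∑ k : Fin (n + 1), if k < i then (f k i : ℤ) else 0) = N i

/-- The Kostant partition function: the number of integer flows on the complete
graph `k_{n+1}` with netflow `N`. -/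
noncomputable def Kn (n : ℕ) (N : Fin (n + 1) → ℤ) : ℕ :=
  Nat.card {f : Fin (n + 1) → Fin (n + 1) → ℕ // IsIntFlow n N f}

/-- The flow polytope of the complete graph `k_{n+1}` with netflow `N`. -/
def FlowPolytope (n : ℕ) (N : Fin (n + 1) → ℝ) : Set (Fin (n + 1) → Fin (n + 1) → ℝ) :=
  {f | (∀ i j : Fin (n + 1), i < j → 0 ≤ f i j) ∧
    (∀ i j : Fin (n + 1), ¬ i < j → f i j = 0) ∧
    ∀ i : Fin (n + 1),
      (∑ j : Fin (n + 1), if i < j then f i j else 0) -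
        (∑ k : Fin (n + 1), if k < i then f k i else 0) = N i}

/-- The flow entropy `H(f)`. -/
noncomputable def flowEntropy (n : ℕ) (N : Fin (n + 1) → ℝ)
    (f : Fin (n + 1) → Fin (n + 1) → ℝ) : ℝ :=
  (∑ i : Fin (n + 1), ∑ j : Fin (n + 1), if i < j then entH (f i j) else 0) +
  ∑ j : Fin (n + 1), if 0 < (j : ℕ) ∧ (j : ℕ) < n then
    entH (∑ i : Fin (n + 1), if i < j then (N i - f i j) else 0) else 0

/-- Partial sums `s_k = N_0 + ⋯ + N_k`. -/
def sPartial (n : ℕ) (N : Fin (n + 1) → ℤ) (k : ℕ) : ℤ :=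
  ∑ j : Fin (n + 1), if (j : ℕ) ≤ k then N j else 0

/-- Extend `(N_0,…,N_{n−1})` to the netflow vector `(N_0,…,N_{n−1},−∑ N_i)`. -/
def extend (n : ℕ) (N : Fin n → ℤ) : Fin (n + 1) → ℤ := Fin.snoc N (-∑ i, N i)

/-!
Adding to a flow, at every vertex, the flow that passes over it gives a contingency table which
vanishes below the diagonal. Apart from a zero row and a zero column, its row sums and its column
sums are `s₀, …, sₙ₋₁`, and the sum of `h` over its entries is the flow entropy. The integer tables
of this shape inject into the integer flows, so it suffices to bound their number from below. This
costs one factor `e^{-h}` for each row and for each column but one, as the last column sum is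
determined by the other margins.

Weight each table by `∏ cᵢⱼ ^ mᵢⱼ` and prescribe the margins one after the other. Prescribing a
margin `k` extracts the `k`-th coefficient of a power series in the scale `t` of that row or
column. When the coefficients `bₐ` are log-concave, they are dominated by a geometric series
touching them at `k`, whence `inf_t t ^ (-k) ∑ bₐ t ^ a ≤ e^{h(k)} b_k`. For a row the series is
`∏ⱼ (1 - cᵢⱼ t)⁻¹`. For a column, log-concavity is the multivariate one of Lorentzian functions:
moving units along one edge at a time from the rows to the columns preserves it, and the indicator
function that prescribes the margins is a limit of Lorentzian Gaussians.
-/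

section LorentzianForms

variable {E : Type*} [AddCommGroup E] [Module ℝ E]

/-- A symmetric bilinear form with at most one positive direction, encoded as being nonpositive on
the kernel of some linear functional. -/
structure IsLorentzian (B : LinearMap.BilinForm ℝ E) : Prop where
  isSymm : B.IsSymm
  exists_nonpos_on_ker : ∃ φ : Module.Dual ℝ E, ∀ x, φ x = 0 → B x x ≤ 0

namespace IsLorentzian

variable {A B Q : LinearMap.BilinForm ℝ E}

theorem apply_mul_apply_le_sq (hB : IsLorentzian B) {v : E} (hv : 0 < B v v) (x : E) :
    B v v * B x x ≤ B v x ^ 2 := by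
  obtain ⟨φ, hφ⟩ := hB.exists_nonpos_on_ker
  have hφv : φ v ≠ 0 := fun h => (hφ v h).not_gt hv
  have hker : B (φ v • x - φ x • v) (φ v • x - φ x • v) ≤ 0 :=
    hφ _ (by simp only [map_sub, map_smul, smul_eq_mul]; ring)
  have hexpand : B v v * B (φ v • x - φ x • v) (φ v • x - φ x • v) =
      φ v ^ 2 * (B v v * B x x - B v x ^ 2) + (φ x * B v v - φ v * B v x) ^ 2 := by
    simp only [map_sub, map_smul, LinearMap.sub_apply, LinearMap.smul_apply, smul_eq_mul,
      hB.isSymm.eq x v]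
    ring
  have hle : φ v ^ 2 * (B v v * B x x - B v x ^ 2) ≤ 0 := by
    linarith [mul_nonpos_of_nonneg_of_nonpos hv.le hker, sq_nonneg (φ x * B v v - φ v * B v x)]
  linarith [nonpos_of_mul_nonpos_right hle (by positivity)]

-- This is Cauchy–Schwarz for `B v ⊗ B v - B v v • B`, which is positive semidefinite by the
-- reverse Cauchy–Schwarz inequality `apply_mul_apply_le_sq`.
theorem mul_sq_le_of_apply_eq_zero (hB : IsLorentzian B) {v x : E} (hv : 0 < B v v)
    (hvx : B v x = 0) (u : E) :
    B v v * B u x ^ 2 ≤ -B x x * (B v u ^ 2 - B v v * B u u) := by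
  let D : LinearMap.BilinForm ℝ E := (B v).smulRight (B v) - B v v • B
  have hD (y z : E) : D y z = B v y * B v z - B v v * B y z := rfl
  have hD_symm : LinearMap.IsSymm D := ⟨fun y z => by
    simp only [RingHom.id_apply, hD, hB.isSymm.eq y z]; ring⟩
  have hD_nonneg (y : E) : 0 ≤ D y y := by
    rw [hD]; linarith [hB.apply_mul_apply_le_sq hv y]
  have hCS := D.apply_sq_le_of_symm hD_nonneg hD_symm u x
  simp only [hD, hvx] at hCS
  refine le_of_mul_le_mul_left ?_ hv
  linarith

theorem of_eq_add_smul (hA : IsLorentzian A) (hB : IsLorentzian B) {c : ℝ} (hc : 0 ≤ c)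
    (hQ : Q = A + c • B) {u v : E} (huv : B v = Q u) (hAuu : 0 < A u u) (hAuv : 0 ≤ A u v)
    (hBvv : 0 < B v v) (hBuv : 0 < B u v) : IsLorentzian Q := by
  have hQ_apply (x y : E) : Q x y = A x y + c * B x y := by rw [hQ]; rfl
  refine ⟨⟨fun x y => ?_⟩, Q u, fun x hx => ?_⟩
  · simp only [hQ_apply, hA.isSymm.eq x y, hB.isSymm.eq x y]
  have hBvx : B v x = 0 := by rw [huv, hx]
  have hAux : A u x = -(c * B u x) := by linarith [hQ_apply u x]
  have hBxx : B x x ≤ 0 := by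
    have := hB.apply_mul_apply_le_sq hBvv x
    rw [hBvx] at this
    exact nonpos_of_mul_nonpos_right (by linarith) hBvv
  have hBvu : B v u = B u v := hB.isSymm.eq v u
  have hAuu_eq : B u v = A u u + c * B u u := by rw [← hBvu, huv, hQ_apply]
  have hBvv_eq : B v v = A u v + c * B u v := by rw [huv, hQ_apply]
  have hgap : c * (B v u ^ 2 - B v v * B u u) ≤ A u u * B v v := by
    have : A u u * B v v - c * (B v u ^ 2 - B v v * B u u) = B u v * A u v := by
      rw [hBvu]; linear_combination (-B v v) * hAuu_eq + B u v * hBvv_eq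
    linarith [mul_nonneg hBuv.le hAuv]
  have hBux : c * B u x ^ 2 ≤ -B x x * A u u := by
    refine le_of_mul_le_mul_left ?_ hBvv
    linarith [mul_le_mul_of_nonneg_left (hB.mul_sq_le_of_apply_eq_zero hBvv hBvx u) hc,
      mul_le_mul_of_nonneg_left hgap (neg_nonneg.mpr hBxx)]
  have hAxx := hA.apply_mul_apply_le_sq hAuu x
  rw [hAux] at hAxx
  refine nonpos_of_mul_nonpos_right (a := A u u) ?_ hAuu
  rw [hQ_apply]
  linarith [mul_le_mul_of_nonneg_left hBux hc]

theorem of_eq_cross {φ ψ : Module.Dual ℝ E} {c : ℝ} (hc : 0 ≤ c)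
    (hB : ∀ x y, B x y = φ x * ψ y + ψ x * φ y - c * (φ x * φ y)) : IsLorentzian B := by
  refine ⟨⟨fun x y => ?_⟩, ψ, fun x hx => ?_⟩
  · simp only [hB]; ring
  · rw [hB, hx]; linarith [mul_nonneg hc (mul_self_nonneg (φ x))]

end IsLorentzian

end LorentzianForms

section LorentzianFunctions

variable {W : Type*} [Fintype W] [DecidableEq W]

/-- The Hankel form of `p` at `g`: the bilinear form with matrix `p (g + eᵢ + eⱼ)`, that is, the
quadratic form obtained by differentiating the exponential generating function of `p`. -/
noncomputable def hankelForm (p : (W → ℕ) → ℝ) (g : W → ℕ) : LinearMap.BilinForm ℝ (W → ℝ) :=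
  Matrix.toBilin' (Matrix.of fun i j => p (g + Pi.single i 1 + Pi.single j 1))

/-- All Hankel forms of `p` are Lorentzian; this is the form of log-concavity for functions of
several variables (Brändén–Huh) that is stable under the recurrences used to count tables. -/
def IsLorentzianFun (p : (W → ℕ) → ℝ) : Prop := ∀ g, IsLorentzian (hankelForm p g)

@[simp]
theorem hankelForm_single_single (p : (W → ℕ) → ℝ) (g : W → ℕ) (i j : W) :
    hankelForm p g (Pi.single i 1) (Pi.single j 1) = p (g + Pi.single i 1 + Pi.single j 1) :=
  Matrix.toBilin'_single ..

theorem hankelForm_apply (p : (W → ℕ) → ℝ) (g : W → ℕ) (x y : W → ℝ) :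
    hankelForm p g x y = ∑ i, ∑ j, x i * p (g + Pi.single i 1 + Pi.single j 1) * y j :=
  Matrix.toBilin'_apply ..

theorem isSymm_hankelForm (p : (W → ℕ) → ℝ) (g : W → ℕ) : (hankelForm p g).IsSymm := by
  refine ⟨fun x y => ?_⟩
  rw [hankelForm_apply, hankelForm_apply, Finset.sum_comm]
  refine sum_congr rfl fun i _ => sum_congr rfl fun j _ => ?_
  rw [add_right_comm]
  ring

theorem IsLorentzianFun.mul_le_sq {p : (W → ℕ) → ℝ} (hL : IsLorentzianFun p) (hp : ∀ g, 0 < p g)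
    (g : W → ℕ) (i j : W) :
    p (g + Pi.single i 1 + Pi.single i 1) * p (g + Pi.single j 1 + Pi.single j 1) ≤
      p (g + Pi.single i 1 + Pi.single j 1) ^ 2 := by
  simpa only [hankelForm_single_single] using
    (hL g).apply_mul_apply_le_sq (v := Pi.single i 1) (by simpa using hp _) (Pi.single j 1)

theorem IsLorentzianFun.segment_mul_le_sq {p : (W → ℕ) → ℝ} (hL : IsLorentzianFun p)
    (hp : ∀ g, 0 < p g) (g : W → ℕ) (i j : W) {a T : ℕ} (haT : a + 2 ≤ T) :
    p (g + Pi.single i (T - a) + Pi.single j a) *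
        p (g + Pi.single i (T - (a + 2)) + Pi.single j (a + 2)) ≤
      p (g + Pi.single i (T - (a + 1)) + Pi.single j (a + 1)) ^ 2 := by
  obtain ⟨d, rfl⟩ := Nat.exists_eq_add_of_le' haT
  rw [show d + (a + 2) - a = d + 1 + 1 by omega, show d + (a + 2) - (a + 2) = d by omega,
    show d + (a + 2) - (a + 1) = d + 1 by omega]
  convert hL.mul_le_sq hp (g + Pi.single i d + Pi.single j a) i j using 3 <;>
    simp only [Pi.single_add, ← one_add_one_eq_two] <;> abel

section TransferStep

variable {p q : (W → ℕ) → ℝ} {u v : W} {c : ℝ}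

theorem isLorentzian_hankelForm_of_add_smul {B : LinearMap.BilinForm ℝ (W → ℝ)} {g : W → ℕ}
    (hp : ∀ g, 0 < p g) (hq : ∀ g, 0 < q g) (hc : 0 ≤ c) (hL : IsLorentzian (hankelForm p g))
    (hB : IsLorentzian B) (hq_eq : hankelForm q g = hankelForm p g + c • B)
    (hv : B (Pi.single v 1) = hankelForm q g (Pi.single u 1)) :
    IsLorentzian (hankelForm q g) := by
  have huv : B (Pi.single u 1) (Pi.single v 1) = B (Pi.single v 1) (Pi.single u 1) :=
    hB.isSymm.eq _ _
  refine hL.of_eq_add_smul hB hc hq_eq hv ?_ ?_ ?_ ?_ <;>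
    simp only [huv, hv, hankelForm_single_single, hp, hq, (hp _).le]

theorem isLorentzian_hankelForm_of_apply_eq_zero {g : W → ℕ} (hp : ∀ g, 0 < p g)
    (hq : ∀ g, 0 < q g) (hc : 0 ≤ c) (h_zero : ∀ g : W → ℕ, g v = 0 → q g = p g)
    (h_succ : ∀ g : W → ℕ,
      q (g + Pi.single v 1) = p (g + Pi.single v 1) + c * q (g + Pi.single u 1))
    (hL : IsLorentzianFun p) (hg : g v = 0) : IsLorentzian (hankelForm q g) := by
  let φ : Module.Dual ℝ (W → ℝ) := LinearMap.proj v
  let ψ : Module.Dual ℝ (W → ℝ) := hankelForm q g (Pi.single u 1)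
  let B : LinearMap.BilinForm ℝ (W → ℝ) :=
    φ.smulRight ψ + ψ.smulRight φ - ψ (Pi.single v 1) • φ.smulRight φ
  have hB (x y : W → ℝ) : B x y = φ x * ψ y + ψ x * φ y - ψ (Pi.single v 1) * (φ x * φ y) := rfl
  have hψ (j : W) : ψ (Pi.single j 1) = q (g + Pi.single u 1 + Pi.single j 1) :=
    hankelForm_single_single ..
  refine isLorentzian_hankelForm_of_add_smul (u := u) (v := v) hp hq hc (hL g)
    (IsLorentzian.of_eq_cross ((hψ v).symm ▸ (hq _).le) hB) ?_ ?_
  · refine LinearMap.BilinForm.ext_basis (Pi.basisFun ℝ W) fun i j => ?_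
    have hBij := hB (Pi.single i 1) (Pi.single j 1)
    simp only [hψ, φ, LinearMap.proj_apply] at hBij
    simp only [Pi.basisFun_apply, LinearMap.add_apply, LinearMap.smul_apply, smul_eq_mul, hBij,
      hankelForm_single_single]
    rcases eq_or_ne i v with rfl | hi
    · rw [add_right_comm, h_succ, add_right_comm g _ (Pi.single i 1),
        add_right_comm g _ (Pi.single u 1)]
      simp
    rcases eq_or_ne j v with rfl | hj
    · rw [h_succ, add_right_comm g _ (Pi.single u 1)]
      simp [hi.symm]
    · rw [h_zero _ (by simp [hg, hi.symm, hj.symm])]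
      simp [hi.symm, hj.symm]
  · ext y
    simp [hB, φ, ψ]

theorem IsLorentzianFun.of_recurrence (hp : ∀ g, 0 < p g) (hq : ∀ g, 0 < q g) (huv : u ≠ v)
    (hc : 0 ≤ c) (h_zero : ∀ g : W → ℕ, g v = 0 → q g = p g)
    (h_succ : ∀ g : W → ℕ,
      q (g + Pi.single v 1) = p (g + Pi.single v 1) + c * q (g + Pi.single u 1))
    (hL : IsLorentzianFun p) : IsLorentzianFun q := by
  intro g
  induction hn : g v generalizing g with
  | zero => exact isLorentzian_hankelForm_of_apply_eq_zero hp hq hc h_zero h_succ hL hn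
  | succ n ih =>
    obtain ⟨g, rfl⟩ : ∃ g', g = g' + Pi.single v 1 :=
      ⟨g - Pi.single v 1, by ext w; by_cases hw : w = v <;> simp [hw]; omega⟩
    refine isLorentzian_hankelForm_of_add_smul (u := u) (v := v) hp hq hc (hL _)
      (ih (g + Pi.single u 1) ?_) ?_ ?_
    · simpa [huv.symm] using hn
    · refine LinearMap.BilinForm.ext_basis (Pi.basisFun ℝ W) fun i j => ?_
      have hij := h_succ (g + Pi.single i 1 + Pi.single j 1)
      simpa [add_right_comm _ _ (Pi.single v 1), add_right_comm _ _ (Pi.single u 1)] using hij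
    · refine (Pi.basisFun ℝ W).ext fun j => ?_
      simp [add_right_comm g _ (Pi.single u 1)]

end TransferStep

end LorentzianFunctions

section Gaussian

open Filter Topology

variable {W : Type*} [Fintype W]

/-- The Gaussian `exp (-∑ κₗ (xₗ - gₗ)²)` on lattice points. It is a positive Lorentzian function
that approximates the indicator of agreement with `g` on the coordinates where `κ` is large; the
coordinates with `κₗ = 0` are left unconstrained. -/
noncomputable def gaussian (κ : W → ℝ) (g x : W → ℕ) : ℝ :=
  Real.exp (-∑ l, κ l * ((x l : ℝ) - g l) ^ 2)

theorem gaussian_pos (κ : W → ℝ) (g x : W → ℕ) : 0 < gaussian κ g x := Real.exp_pos _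

theorem gaussian_add_single [DecidableEq W] (κ : W → ℝ) (g x : W → ℕ) (i : W) :
    gaussian κ g (x + Pi.single i 1) =
      gaussian κ g x * Real.exp (-2 * κ i * ((x i : ℝ) - g i) - κ i) := by
  have hdiff : ∑ l, κ l * (((x + Pi.single i 1 : W → ℕ) l : ℝ) - g l) ^ 2 -
      ∑ l, κ l * ((x l : ℝ) - g l) ^ 2 = 2 * κ i * ((x i : ℝ) - g i) + κ i := by
    rw [← sum_sub_distrib, Fintype.sum_eq_single i fun l hl => by simp [hl]]
    simp only [Pi.add_apply, Pi.single_eq_same, Nat.cast_add, Nat.cast_one]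
    ring
  rw [gaussian, gaussian, ← Real.exp_add]
  congr 1
  linarith

theorem isLorentzianFun_gaussian [DecidableEq W] {κ : W → ℝ} (hκ : ∀ l, 0 ≤ κ l) (g : W → ℕ) :
    IsLorentzianFun (gaussian κ g) := by
  intro x
  let u : W → ℝ := fun i => Real.exp (-2 * κ i * ((x i : ℝ) - g i) - κ i)
  have hentry (i j : W) : gaussian κ g (x + Pi.single i 1 + Pi.single j 1) = gaussian κ g x *
      (u i * u j - if i = j then (1 - Real.exp (-2 * κ i)) * u i ^ 2 else 0) := by
    rw [gaussian_add_single, gaussian_add_single]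
    rcases eq_or_ne i j with rfl | hij
    · have : Real.exp (-2 * κ i * (((x + Pi.single i 1 : W → ℕ) i : ℝ) - g i) - κ i) =
          Real.exp (-2 * κ i) * u i := by
        rw [← Real.exp_add]; simp; ring
      rw [this, if_pos rfl]; ring
    · simp [hij, hij.symm, u, mul_assoc]
  refine ⟨isSymm_hankelForm _ _, ∑ i, u i • LinearMap.proj i, fun y hy => ?_⟩
  have hy_sum : ∑ i, u i * y i = 0 := by simpa using hy
  have hform : hankelForm (gaussian κ g) x y y = gaussian κ g x *
      ((∑ i, u i * y i) ^ 2 - ∑ i, (1 - Real.exp (-2 * κ i)) * (u i * y i) ^ 2) := by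
    simp only [hankelForm_apply, hentry, sq, ← sum_sub_distrib, mul_sum]
    refine sum_congr rfl fun i _ => ?_
    simp only [mul_sub, sub_mul, sum_sub_distrib, mul_ite, ite_mul, mul_zero, zero_mul,
      sum_ite_eq, mem_univ, if_true]
    congr 1
    · rw [sum_mul, mul_sum]
      exact sum_congr rfl fun j _ => by ring
    · ring
  rw [hform, hy_sum]
  refine mul_nonpos_of_nonneg_of_nonpos (gaussian_pos κ g x).le ?_
  have hnonneg : 0 ≤ ∑ i, (1 - Real.exp (-2 * κ i)) * (u i * y i) ^ 2 :=
    sum_nonneg fun i _ => mul_nonneg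
      (sub_nonneg.mpr (Real.exp_le_one_iff.mpr (by linarith [hκ i]))) (sq_nonneg _)
  linarith

theorem gaussian_eq_one {κ : W → ℝ} {g x : W → ℕ} (h : ∀ l, κ l ≠ 0 → x l = g l) :
    gaussian κ g x = 1 := by
  rw [gaussian, sum_eq_zero fun l _ => ?_, neg_zero, Real.exp_zero]
  by_cases hl : κ l = 0
  · rw [hl, zero_mul]
  · rw [h l hl, sub_self, zero_pow two_ne_zero, mul_zero]

/-- The indicator function of the vectors that agree with `g` on `L`. -/
def agreeIndicator (L : Finset W) (g x : W → ℕ) : ℝ := if ∀ l ∈ L, x l = g l then 1 else 0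

theorem agreeIndicator_le_gaussian [DecidableEq W] (L : Finset W) (t : ℝ) (g x : W → ℕ) :
    agreeIndicator L g x ≤ gaussian (fun l => if l ∈ L then t else 0) g x := by
  rw [agreeIndicator]
  split_ifs with h
  · refine (gaussian_eq_one fun l hl => h l ?_).ge
    by_contra hlL
    exact hl (if_neg hlL)
  · exact (gaussian_pos ..).le

theorem tendsto_gaussian_atTop [DecidableEq W] (L : Finset W) (g x : W → ℕ) :
    Tendsto (fun t : ℝ => gaussian (fun l => if l ∈ L then t else 0) g x) atTop
      (𝓝 (agreeIndicator L g x)) := by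
  rw [agreeIndicator]
  split_ifs with h
  · refine tendsto_const_nhds.congr fun t => (gaussian_eq_one fun l hl => h l ?_).symm
    by_contra hlL
    exact hl (if_neg hlL)
  · push Not at h
    obtain ⟨l, hl, hne⟩ := h
    have hpos : 0 < ((x l : ℝ) - g l) ^ 2 := by
      have : (x l : ℝ) - g l ≠ 0 := sub_ne_zero.mpr (Nat.cast_injective.ne hne)
      positivity
    refine squeeze_zero' (.of_forall fun t => (gaussian_pos _ g x).le) ?_
      (Real.tendsto_exp_neg_atTop_nhds_zero.comp (tendsto_id.atTop_mul_const hpos))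
    filter_upwards [eventually_ge_atTop 0] with t ht
    have hle := single_le_sum (s := univ)
      (f := fun l => (if l ∈ L then t else 0) * ((x l : ℝ) - g l) ^ 2)
      (fun l _ => by positivity) (mem_univ l)
    simp only [hl, if_true] at hle
    exact Real.exp_le_exp.mpr (neg_le_neg hle)

end Gaussian

section Transfer

variable {R C : Type*}

/-- The table with entry `1` in position `(i, j)` and zeros elsewhere. -/
def unitTable [DecidableEq R] [DecidableEq C] (i : R) (j : C) : R → C → ℕ :=
  fun a b => if a = i ∧ b = j then 1 else 0

theorem rowSum_add_unitTable [DecidableEq R] [Fintype C] [DecidableEq C] (m : R → C → ℕ)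
    (i : R) (j : C) (a : R) :
    ∑ b, (m + unitTable i j) a b = ∑ b, m a b + (Pi.single i 1 : R → ℕ) a := by
  rcases eq_or_ne a i with rfl | ha <;> simp [unitTable, sum_add_distrib, *]

theorem colSum_add_unitTable [Fintype R] [DecidableEq R] [DecidableEq C] (m : R → C → ℕ)
    (i : R) (j b : C) :
    ∑ a, (m + unitTable i j) a b = ∑ a, m a b + (Pi.single j 1 : C → ℕ) b := by
  rcases eq_or_ne b j with rfl | hb <;> simp [unitTable, sum_add_distrib, *]

variable [Fintype R] [Fintype C]

/-- The weight `∏ cᵢⱼ ^ mᵢⱼ` of a table of natural numbers. -/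
def tableWeight (c : R → C → ℝ) (m : R → C → ℕ) : ℝ := ∏ i, ∏ j, c i j ^ m i j

theorem tableWeight_pos {c : R → C → ℝ} (hc : ∀ i j, 0 < c i j) (m : R → C → ℕ) :
    0 < tableWeight c m :=
  prod_pos fun i _ => prod_pos fun j _ => pow_pos (hc i j) _

theorem tableWeight_add (c : R → C → ℝ) (m m' : R → C → ℕ) :
    tableWeight c (m + m') = tableWeight c m * tableWeight c m' := by
  simp only [tableWeight, Pi.add_apply, pow_add, prod_mul_distrib]

/-- The vector of row and column entries obtained from `g` by moving `m i j` units from row `i` to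
column `j`, for all `i` and `j`; it is meaningful when the row sums of `m` are at most those of
`g`. -/
def transfer (m : R → C → ℕ) (g : R ⊕ C → ℕ) : R ⊕ C → ℕ :=
  Sum.elim (fun i => g (Sum.inl i) - ∑ j, m i j) fun j => g (Sum.inr j) + ∑ i, m i j

variable [DecidableEq R] [DecidableEq C]

theorem tableWeight_unitTable (c : R → C → ℝ) (i : R) (j : C) :
    tableWeight c (unitTable i j) = c i j := by
  rw [tableWeight, Fintype.prod_eq_single i fun a ha => by simp [unitTable, ha],
    Fintype.prod_eq_single j fun b hb => by simp [unitTable, hb]]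
  simp [unitTable]

theorem transfer_add_unitTable (m : R → C → ℕ) (g : R ⊕ C → ℕ) (i : R) (j : C) :
    transfer (m + unitTable i j) (g + Pi.single (Sum.inl i) 1) =
      transfer m (g + Pi.single (Sum.inr j) 1) := by
  ext (a | b)
  · rcases eq_or_ne a i with rfl | ha <;>
      simp only [transfer, Sum.elim_inl, rowSum_add_unitTable] <;> simp [*]
  · rcases eq_or_ne b j with rfl | hb <;>
      simp only [transfer, Sum.elim_inr, colSum_add_unitTable] <;>
      simp [*, add_assoc, add_comm, add_left_comm]

/-- The tables supported on `E` with row sums at most `r`. -/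
def boundedTables (E : Finset (R × C)) (r : R → ℕ) : Finset (R → C → ℕ) :=
  {m ∈ Iic fun i _ => r i | (∀ i j, (i, j) ∉ E → m i j = 0) ∧ ∀ i, ∑ j, m i j ≤ r i}

theorem mem_boundedTables {E : Finset (R × C)} {r : R → ℕ} {m : R → C → ℕ} :
    m ∈ boundedTables E r ↔ (∀ i j, (i, j) ∉ E → m i j = 0) ∧ ∀ i, ∑ j, m i j ≤ r i := by
  simp only [boundedTables, mem_filter, mem_Iic, and_iff_right_iff_imp]
  exact fun h i j =>
    (single_le_sum (f := m i) (fun _ _ => Nat.zero_le _) (mem_univ j)).trans (h.2 i)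

theorem boundedTables_empty (r : R → ℕ) : boundedTables (∅ : Finset (R × C)) r = {0} := by
  ext m
  rw [mem_boundedTables, mem_singleton]
  refine ⟨fun h => funext₂ fun i j => h.1 i j (notMem_empty _), ?_⟩
  rintro rfl
  simp

theorem filter_boundedTables_insert_eq_zero {E : Finset (R × C)} {i : R} {j : C}
    (hE : (i, j) ∉ E) (r : R → ℕ) :
    {m ∈ boundedTables (insert (i, j) E) r | m i j = 0} = boundedTables E r := by
  ext m
  simp only [mem_filter, mem_boundedTables, mem_insert]
  refine ⟨fun ⟨⟨hm, hr⟩, hij⟩ => ⟨fun a b hab => ?_, hr⟩,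
    fun ⟨hm, hr⟩ => ⟨⟨fun a b hab => hm a b (hab ∘ .inr), hr⟩, hm i j hE⟩⟩
  by_cases h : (a, b) = (i, j)
  · obtain ⟨rfl, rfl⟩ := Prod.mk.inj h
    exact hij
  · exact hm a b (by tauto)

theorem add_unitTable_mem_boundedTables_iff {E : Finset (R × C)} {i : R} {j : C} {r : R → ℕ}
    {m : R → C → ℕ} :
    m + unitTable i j ∈ boundedTables (insert (i, j) E) (r + Pi.single i 1) ↔
      m ∈ boundedTables (insert (i, j) E) r := by
  simp only [mem_boundedTables, rowSum_add_unitTable]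
  simp only [Pi.add_apply, add_le_add_iff_right]
  refine and_congr_left' (forall₂_congr fun a b => imp_congr_right fun hab => ?_)
  have : unitTable i j a b = 0 := if_neg fun h => hab (by simp [h])
  rw [this, add_zero]

theorem filter_boundedTables_insert_ne_zero (E : Finset (R × C)) (i : R) (j : C) (r : R → ℕ) :
    {m ∈ boundedTables (insert (i, j) E) (r + Pi.single i 1) | m i j ≠ 0} =
      (boundedTables (insert (i, j) E) r).map (addRightEmbedding (unitTable i j)) := by
  ext m
  simp only [mem_filter, mem_map, addRightEmbedding_apply]
  constructor
  · rintro ⟨hm, hij⟩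
    have hle : unitTable i j ≤ m := fun a b => by
      by_cases hab : a = i ∧ b = j
      · simpa [unitTable, hab] using Nat.one_le_iff_ne_zero.mpr hij
      · simp [unitTable, hab]
    refine ⟨m - unitTable i j, ?_, tsub_add_cancel_of_le hle⟩
    rwa [← add_unitTable_mem_boundedTables_iff, tsub_add_cancel_of_le hle]
  · rintro ⟨m, hm, rfl⟩
    exact ⟨add_unitTable_mem_boundedTables_iff.mpr hm, by simp [unitTable]⟩

/-- The sum of `p` over all vectors reached from `g` by transfers along `E`, weighted by `c`. -/
noncomputable def transferSum (c : R → C → ℝ) (E : Finset (R × C)) (p : (R ⊕ C → ℕ) → ℝ)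
    (g : R ⊕ C → ℕ) : ℝ :=
  ∑ m ∈ boundedTables E (g ∘ Sum.inl), tableWeight c m * p (transfer m g)

variable {c : R → C → ℝ} {p : (R ⊕ C → ℕ) → ℝ}

theorem transferSum_empty (c : R → C → ℝ) (p : (R ⊕ C → ℕ) → ℝ) : transferSum c ∅ p = p := by
  ext g
  have : transfer (0 : R → C → ℕ) g = g := by ext (i | j) <;> simp [transfer]
  simp [transferSum, boundedTables_empty, this, tableWeight]

theorem transferSum_pos (hc : ∀ i j, 0 < c i j) (hp : ∀ g, 0 < p g) (E : Finset (R × C))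
    (g : R ⊕ C → ℕ) : 0 < transferSum c E p g :=
  sum_pos (fun m _ => mul_pos (tableWeight_pos hc m) (hp _)) ⟨0, by simp [mem_boundedTables]⟩

theorem transferSum_mono {q : (R ⊕ C → ℕ) → ℝ} (hc : ∀ i j, 0 < c i j) (hpq : ∀ g, p g ≤ q g)
    (E : Finset (R × C)) (g : R ⊕ C → ℕ) : transferSum c E p g ≤ transferSum c E q g :=
  sum_le_sum fun m _ => mul_le_mul_of_nonneg_left (hpq _) (tableWeight_pos hc m).le

theorem transferSum_insert_of_apply_eq_zero {E : Finset (R × C)} {i : R} {j : C} (hE : (i, j) ∉ E)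
    {g : R ⊕ C → ℕ} (hg : g (Sum.inl i) = 0) :
    transferSum c (insert (i, j) E) p g = transferSum c E p g := by
  rw [transferSum, transferSum, ← filter_boundedTables_insert_eq_zero hE, filter_true_of_mem]
  intro m hm
  have := (mem_boundedTables.mp hm).2 i
  rw [Function.comp_apply, hg, Nat.le_zero, sum_eq_zero_iff] at this
  exact this j (mem_univ j)

theorem transferSum_insert_add_single {E : Finset (R × C)} {i : R} {j : C} (hE : (i, j) ∉ E)
    (g : R ⊕ C → ℕ) :
    transferSum c (insert (i, j) E) p (g + Pi.single (Sum.inl i) 1) =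
      transferSum c E p (g + Pi.single (Sum.inl i) 1) +
        c i j * transferSum c (insert (i, j) E) p (g + Pi.single (Sum.inr j) 1) := by
  have hinl : (g + Pi.single (Sum.inl i) 1) ∘ Sum.inl = g ∘ Sum.inl + Pi.single i 1 := by
    ext a; simp [Pi.single_apply]
  have hinr : (g + Pi.single (Sum.inr j) 1) ∘ Sum.inl = g ∘ Sum.inl := by
    ext a; simp
  rw [transferSum, ← sum_filter_add_sum_filter_not _ fun m => m i j = 0,
    filter_boundedTables_insert_eq_zero hE, hinl, filter_boundedTables_insert_ne_zero, sum_map,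
    transferSum, transferSum, hinl, hinr, mul_sum]
  simp only [addRightEmbedding_apply, transfer_add_unitTable, tableWeight_add,
    tableWeight_unitTable]
  congr 1
  exact sum_congr rfl fun m _ => by ring

theorem isLorentzianFun_transferSum (hc : ∀ i j, 0 < c i j) (hp : ∀ g, 0 < p g)
    (hL : IsLorentzianFun p) (E : Finset (R × C)) : IsLorentzianFun (transferSum c E p) := by
  induction E using Finset.induction_on with
  | empty => rwa [transferSum_empty]
  | insert e E he ih =>
    exact ih.of_recurrence (transferSum_pos hc hp E) (transferSum_pos hc hp _) Sum.inr_ne_inl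
      (hc e.1 e.2).le (fun g hg => transferSum_insert_of_apply_eq_zero he hg)
      (transferSum_insert_add_single he)

end Transfer

section EntropyCapacity

theorem exp_entH_natCast (k : ℕ) : Real.exp (entH k) = (k + 1) ^ (k + 1) / k ^ k := by
  have h (n : ℕ) : Real.exp (n * Real.log n) = n ^ n := by
    rcases n.eq_zero_or_pos with rfl | hn
    · simp
    · rw [Real.exp_nat_mul, Real.exp_log (Nat.cast_pos.mpr hn)]
  rw [entH, Real.exp_sub, h k]
  exact_mod_cast congrArg (· / (k : ℝ) ^ k) (h (k + 1))

-- `q = k / (k + 1)` maximises `q ^ k * (1 - q)`, with maximal value `exp (-entH k)`.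
theorem le_mul_exp_entH_of_forall_mem_Ioo {C b : ℝ} {k : ℕ}
    (h : ∀ q ∈ Set.Ioo (0 : ℝ) 1, C * (q ^ k * (1 - q)) ≤ b) : C ≤ b * Real.exp (entH k) := by
  have hk : (k / (k + 1) : ℝ) ∈ closure (Set.Ioo (0 : ℝ) 1) := by
    rw [closure_Ioo zero_ne_one]
    exact ⟨by positivity, div_le_one_of_le₀ (by linarith) (by positivity)⟩
  have hle : C * ((k / (k + 1) : ℝ) ^ k * (1 - k / (k + 1))) ≤ b :=
    le_on_closure (f := fun q => C * (q ^ k * (1 - q))) h (by fun_prop) continuousOn_const hk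
  have hmax : ((k / (k + 1) : ℝ) ^ k * (1 - k / (k + 1))) * Real.exp (entH k) = 1 := by
    have hk0 : (k : ℝ) ^ k ≠ 0 := by
      rcases eq_or_ne k 0 with rfl | hk
      · simp
      · positivity
    have hsub : 1 - (k / (k + 1) : ℝ) = 1 / (k + 1) := by field_simp; ring
    rw [exp_entH_natCast, hsub, div_pow, pow_succ]
    field_simp
  calc C = C * ((k / (k + 1) : ℝ) ^ k * (1 - k / (k + 1))) * Real.exp (entH k) := by
        rw [mul_assoc, hmax, mul_one]
    _ ≤ b * Real.exp (entH k) := by gcongr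

theorem rpow_mul_exp_entH_le {s M : ℝ} (hs0 : 0 < s) (hs1 : s < 1) (hM : 0 ≤ M) :
    s ^ M * Real.exp (entH M) ≤ (1 - s)⁻¹ := by
  have hs : 0 < 1 - s := sub_pos.mpr hs1
  have hlog_one_sub : Real.log (1 - s) + Real.log (M + 1) ≤ (1 - s) * (M + 1) - 1 := by
    rw [← Real.log_mul hs.ne' (by positivity)]
    exact Real.log_le_sub_one_of_pos (by positivity)
  have hlog : M * (Real.log s + Real.log (M + 1) - Real.log M) ≤ s * (M + 1) - M := by
    rcases hM.eq_or_lt with rfl | hM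
    · simpa using hs0.le
    · rw [← Real.log_mul hs0.ne' (by positivity), ← Real.log_div (by positivity) hM.ne']
      calc M * Real.log (s * (M + 1) / M) ≤ M * (s * (M + 1) / M - 1) := by
            gcongr; exact Real.log_le_sub_one_of_pos (by positivity)
        _ = s * (M + 1) - M := by field_simp
  rw [Real.rpow_def_of_pos hs0, ← Real.exp_add, ← Real.exp_log (inv_pos.mpr hs), Real.log_inv,
    Real.exp_le_exp, entH]
  linarith

section LogConcave

variable {b : ℕ → ℝ}

theorem mul_le_mul_of_logConcave {T : ℕ} (hpos : ∀ a ≤ T, 0 < b a)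
    (hlc : ∀ a, a + 2 ≤ T → b a * b (a + 2) ≤ b (a + 1) ^ 2) {i d : ℕ} (hT : i + d + 1 ≤ T) :
    b (i + d + 1) * b i ≤ b (i + 1) * b (i + d) := by
  induction d with
  | zero => rfl
  | succ d ih =>
    have hd : 0 < b (i + d) := hpos _ (by omega)
    refine le_of_mul_le_mul_left ?_ hd
    calc b (i + d) * (b (i + d + 2) * b i) = b (i + d) * b (i + d + 2) * b i := by ring
      _ ≤ b (i + d + 1) ^ 2 * b i := by
          gcongr
          · exact (hpos i (by omega)).le
          · exact hlc (i + d) (by omega)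
      _ = b (i + d + 1) * (b (i + d + 1) * b i) := by ring
      _ ≤ b (i + d + 1) * (b (i + 1) * b (i + d)) :=
          mul_le_mul_of_nonneg_left (ih (by omega)) (hpos _ (by omega)).le
      _ = b (i + d) * (b (i + 1) * b (i + d + 1)) := by ring

theorem mul_pow_le_of_logConcave {T k : ℕ} (hpos : ∀ a ≤ T, 0 < b a)
    (hlc : ∀ a, a + 2 ≤ T → b a * b (a + 2) ≤ b (a + 1) ^ 2) (hk : k < T) {a : ℕ} (ha : a ≤ T) :
    b a * (b (k + 1) / b k) ^ k ≤ b k * (b (k + 1) / b k) ^ a := by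
  have hk0 : 0 < b k := hpos k hk.le
  set r := b (k + 1) / b k with hr
  have hr0 : 0 < r := div_pos (hpos _ hk) hk0
  rcases le_total k a with hka | hka
  · induction a, hka using Nat.le_induction with
    | base => rfl
    | succ a hka ih =>
      obtain ⟨d, rfl⟩ := Nat.exists_eq_add_of_le hka
      have hstep : b (k + d + 1) ≤ r * b (k + d) := by
        rw [hr, div_mul_eq_mul_div, le_div_iff₀ hk0]
        exact mul_le_mul_of_logConcave hpos hlc ha
      calc b (k + d + 1) * r ^ k ≤ r * b (k + d) * r ^ k := by gcongr
        _ = r * (b (k + d) * r ^ k) := by ring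
        _ ≤ r * (b k * r ^ (k + d)) := mul_le_mul_of_nonneg_left (ih (by omega)) hr0.le
        _ = b k * r ^ (k + d + 1) := by ring
  · induction hka using Nat.decreasingInduction with
    | self => rfl
    | of_succ a hak ih =>
      obtain ⟨d, rfl⟩ := Nat.exists_eq_add_of_le hak.le
      have hstep : r * b a ≤ b (a + 1) := by
        rw [hr, div_mul_eq_mul_div, div_le_iff₀ hk0]
        exact mul_le_mul_of_logConcave hpos hlc hk
      refine le_of_mul_le_mul_left ?_ hr0
      calc r * (b a * r ^ (a + d)) = r * b a * r ^ (a + d) := by ring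
        _ ≤ b (a + 1) * r ^ (a + d) := by gcongr
        _ ≤ b (a + d) * r ^ (a + 1) := ih (by omega)
        _ = r * (b (a + d) * r ^ a) := by ring

-- With `b a ≤ b k * r ^ (a - k)`, evaluating the power series at `t = q / r` compares it with a
-- geometric series of ratio `q`.
theorem le_mul_exp_entH_of_mul_pow_le {C r : ℝ} {k : ℕ} (hb : ∀ a, 0 ≤ b a) (hr : 0 < r)
    (hmaj : ∀ a, b a * r ^ k ≤ b k * r ^ a)
    (hC : ∀ t s, 0 < t → HasSum (fun a => b a * t ^ a) s → C * t ^ k ≤ s) :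
    C ≤ b k * Real.exp (entH k) := by
  refine le_mul_exp_entH_of_forall_mem_Ioo fun q ⟨hq0, hq1⟩ => ?_
  have hterm (a : ℕ) : b a * (q / r) ^ a ≤ b k / r ^ k * q ^ a := by
    rw [div_pow, div_mul_eq_mul_div, mul_div_assoc',
      div_le_div_iff₀ (by positivity) (by positivity)]
    calc b a * q ^ a * r ^ k = b a * r ^ k * q ^ a := by ring
      _ ≤ b k * r ^ a * q ^ a := mul_le_mul_of_nonneg_right (hmaj a) (by positivity)
      _ = b k * q ^ a * r ^ a := by ring
  have hgeom : HasSum (fun a => b k / r ^ k * q ^ a) (b k / r ^ k * (1 - q)⁻¹) :=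
    (hasSum_geometric_of_lt_one hq0.le hq1).mul_left _
  obtain ⟨s, hs⟩ : Summable fun a => b a * (q / r) ^ a :=
    .of_nonneg_of_le (fun a => mul_nonneg (hb a) (by positivity)) hterm hgeom.summable
  have hle : C * (q / r) ^ k ≤ b k / r ^ k * (1 - q)⁻¹ :=
    (hC _ s (by positivity) hs).trans (hasSum_le hterm hs hgeom)
  have : 0 < 1 - q := sub_pos.mpr hq1
  calc C * (q ^ k * (1 - q)) = C * (q / r) ^ k * (r ^ k * (1 - q)) := by rw [div_pow]; field_simp
    _ ≤ b k / r ^ k * (1 - q)⁻¹ * (r ^ k * (1 - q)) := by gcongr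
    _ = b k := by field_simp

theorem le_mul_exp_entH_of_forall_le_sum {C : ℝ} {T k : ℕ} (hpos : ∀ a ≤ T, 0 < b a)
    (hlc : ∀ a, a + 2 ≤ T → b a * b (a + 2) ≤ b (a + 1) ^ 2) (hk : k < T)
    (hC : ∀ t, 0 < t → C * t ^ k ≤ ∑ a ∈ range (T + 1), b a * t ^ a) :
    C ≤ b k * Real.exp (entH k) := by
  let b' : ℕ → ℝ := fun a => if a ≤ T then b a else 0
  have hb'k : b' k = b k := if_pos hk.le
  have hr0 : 0 < b (k + 1) / b k := div_pos (hpos _ hk) (hpos k hk.le)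
  rw [← hb'k]
  refine le_mul_exp_entH_of_mul_pow_le (r := b (k + 1) / b k) (fun a => ?_) hr0 (fun a => ?_)
    fun t s ht hs => ?_
  · by_cases ha : a ≤ T
    · simpa only [b', if_pos ha] using (hpos a ha).le
    · simp only [b', if_neg ha, le_refl]
  · rw [hb'k]
    by_cases ha : a ≤ T
    · simpa only [b', if_pos ha] using mul_pow_le_of_logConcave hpos hlc hk ha
    · have := hpos k hk.le
      simp only [b', if_neg ha, zero_mul]
      positivity
  · refine (hC t ht).trans_eq (HasSum.unique ?_ hs)
    have hsum : ∑ a ∈ range (T + 1), b a * t ^ a = ∑ a ∈ range (T + 1), b' a * t ^ a :=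
      sum_congr rfl fun a ha => by simp only [b', if_pos (Nat.lt_succ_iff.mp (mem_range.mp ha))]
    rw [hsum]
    refine hasSum_sum_of_ne_finset_zero fun a ha => ?_
    simp only [b', if_neg fun h => ha (mem_range.mpr (Nat.lt_succ_iff.mpr h)), zero_mul]

end LogConcave

theorem IsLorentzianFun.le_segment_mul_exp_entH {W : Type*} [Fintype W] [DecidableEq W]
    {p : (W → ℕ) → ℝ} (hL : IsLorentzianFun p) (hp : ∀ g, 0 < p g) (g : W → ℕ) (i j : W)
    {C : ℝ} {k T : ℕ} (hk : k < T)
    (hC : ∀ t, 0 < t → C * t ^ k ≤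
      ∑ a ∈ range (T + 1), p (g + Pi.single i (T - a) + Pi.single j a) * t ^ a) :
    C ≤ p (g + Pi.single i (T - k) + Pi.single j k) * Real.exp (entH k) :=
  le_mul_exp_entH_of_forall_le_sum
    (b := fun a => p (g + Pi.single i (T - a) + Pi.single j a)) (fun _ _ => hp _)
    (fun _ ha => hL.segment_mul_le_sq hp g i j ha) hk hC

end EntropyCapacity

section RowBound

theorem mul_le_mul_of_recurrence {b b' : ℕ → ℝ} {c : ℝ} (hc : 0 ≤ c) (hb : ∀ a, 0 < b a)
    (hb' : ∀ a, 0 < b' a) (hlc : ∀ a, b a * b (a + 2) ≤ b (a + 1) ^ 2) (h0 : b' 0 = b 0)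
    (hsucc : ∀ a, b' (a + 1) = b (a + 1) + c * b' a) (a : ℕ) :
    b' a * b (a + 2) ≤ b' (a + 1) * b (a + 1) := by
  induction a with
  | zero =>
    rw [hsucc, h0]
    linarith [hlc 0, mul_nonneg hc (mul_pos (hb 0) (hb 1)).le]
  | succ a ih =>
    have hcross : b' a * b (a + 3) ≤ b' (a + 1) * b (a + 2) := by
      refine le_of_mul_le_mul_left ?_ (mul_pos (hb (a + 1)) (hb (a + 2)))
      calc b (a + 1) * b (a + 2) * (b' a * b (a + 3))
          = b' a * b (a + 2) * (b (a + 1) * b (a + 3)) := by ring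
        _ ≤ b' (a + 1) * b (a + 1) * b (a + 2) ^ 2 :=
          mul_le_mul ih (hlc (a + 1)) (mul_pos (hb _) (hb _)).le (mul_pos (hb' _) (hb _)).le
        _ = b (a + 1) * b (a + 2) * (b' (a + 1) * b (a + 2)) := by ring
    calc b' (a + 1) * b (a + 3) = b (a + 1) * b (a + 3) + c * (b' a * b (a + 3)) := by
          rw [hsucc a]; ring
      _ ≤ b (a + 2) ^ 2 + c * (b' (a + 1) * b (a + 2)) :=
          add_le_add (hlc (a + 1)) (mul_le_mul_of_nonneg_left hcross hc)
      _ = b' (a + 2) * b (a + 2) := by rw [hsucc (a + 1)]; ring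

theorem logConcave_of_recurrence {b b' : ℕ → ℝ} {c : ℝ} (hc : 0 ≤ c) (hb : ∀ a, 0 < b a)
    (hb' : ∀ a, 0 < b' a) (hlc : ∀ a, b a * b (a + 2) ≤ b (a + 1) ^ 2) (h0 : b' 0 = b 0)
    (hsucc : ∀ a, b' (a + 1) = b (a + 1) + c * b' a) (a : ℕ) :
    b' a * b' (a + 2) ≤ b' (a + 1) ^ 2 :=
  calc b' a * b' (a + 2) = b' a * b (a + 2) + c * b' a * b' (a + 1) := by rw [hsucc (a + 1)]; ring
    _ ≤ b' (a + 1) * b (a + 1) + c * b' a * b' (a + 1) := by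
        gcongr ?_ + _; exact mul_le_mul_of_recurrence hc hb hb' hlc h0 hsucc a
    _ = b' (a + 1) ^ 2 := by rw [hsucc a]; ring

variable {C : Type*}

/-- The generating function `∏ (1 - c j X)⁻¹` of the complete homogeneous symmetric polynomials
in the numbers `c j`, `j ∈ s`. -/
noncomputable def completeHomogeneousSeries (c : C → ℝ) (s : Finset C) : PowerSeries ℝ :=
  ∏ j ∈ s, PowerSeries.mk fun a => c j ^ a

local notation "H" => completeHomogeneousSeries

theorem coeff_completeHomogeneousSeries [DecidableEq C] (c : C → ℝ) (s : Finset C) (k : ℕ) :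
    (H c s).coeff k = ∑ f ∈ piAntidiag s k, ∏ j ∈ s, c j ^ f j := by
  simp only [completeHomogeneousSeries, PowerSeries.coeff_prod, PowerSeries.coeff_mk]
  refine sum_bij (fun f _ => f) (fun f hf => ?_) (fun f _ g _ => DFunLike.coe_injective.eq_iff.mp)
    (fun f hf => ?_) fun f _ => rfl
  · simpa [subset_iff] using hf
  · obtain ⟨hsum, hsupp⟩ := mem_piAntidiag.mp hf
    exact ⟨.onFinset s f hsupp, by simpa [subset_iff] using ⟨hsum, hsupp⟩, rfl⟩

theorem coeff_zero_completeHomogeneousSeries_cons (c : C → ℝ) {s : Finset C} {j : C} (hj : j ∉ s) :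
    (H c (cons j s hj)).coeff 0 = (H c s).coeff 0 := by
  rw [completeHomogeneousSeries, prod_cons, ← completeHomogeneousSeries]
  simp

theorem coeff_succ_completeHomogeneousSeries_cons (c : C → ℝ) {s : Finset C} {j : C} (hj : j ∉ s)
    (a : ℕ) : (H c (cons j s hj)).coeff (a + 1) =
      (H c s).coeff (a + 1) + c j * (H c (cons j s hj)).coeff a := by
  have hgeom : (PowerSeries.mk fun a => c j ^ a) =
      1 + PowerSeries.C (c j) * (PowerSeries.X * PowerSeries.mk fun a => c j ^ a) := by
    ext a
    cases a with
    | zero => simp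
    | succ a => simp [PowerSeries.coeff_succ_X_mul, PowerSeries.coeff_one, pow_succ']
  have hcons : H c (cons j s hj) =
      H c s + PowerSeries.C (c j) * (PowerSeries.X * H c (cons j s hj)) := by
    rw [completeHomogeneousSeries, prod_cons, ← completeHomogeneousSeries]
    nth_rewrite 1 [hgeom]
    ring
  rw [hcons, map_add, PowerSeries.coeff_C_mul, PowerSeries.coeff_succ_X_mul, ← hcons]

theorem coeff_completeHomogeneousSeries_singleton (c : C → ℝ) (j : C) (a : ℕ) :
    (H c {j}).coeff a = c j ^ a := by
  rw [completeHomogeneousSeries, prod_singleton, PowerSeries.coeff_mk]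

variable {c : C → ℝ} {s : Finset C}

theorem coeff_completeHomogeneousSeries_pos (hc : ∀ j, 0 < c j) (hs : s.Nonempty) (a : ℕ) :
    0 < (H c s).coeff a := by
  induction hs using Finset.Nonempty.cons_induction generalizing a with
  | singleton j =>
    rw [coeff_completeHomogeneousSeries_singleton]
    exact pow_pos (hc j) a
  | cons j s hj _ ih =>
    induction a with
    | zero => rw [coeff_zero_completeHomogeneousSeries_cons]; exact ih 0
    | succ a iha =>
      rw [coeff_succ_completeHomogeneousSeries_cons]
      exact add_pos (ih _) (mul_pos (hc j) iha)

theorem coeff_completeHomogeneousSeries_logConcave (hc : ∀ j, 0 < c j) (hs : s.Nonempty) (a : ℕ) :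
    (H c s).coeff a * (H c s).coeff (a + 2) ≤ (H c s).coeff (a + 1) ^ 2 := by
  induction hs using Finset.Nonempty.cons_induction generalizing a with
  | singleton j =>
    simp only [coeff_completeHomogeneousSeries_singleton]
    exact le_of_eq (by ring)
  | cons j s hj hs ih =>
    exact logConcave_of_recurrence (hc j).le (coeff_completeHomogeneousSeries_pos hc hs)
      (coeff_completeHomogeneousSeries_pos hc (cons_nonempty hj)) ih
      (coeff_zero_completeHomogeneousSeries_cons c hj)
      (coeff_succ_completeHomogeneousSeries_cons c hj) a

theorem pow_le_coeff_completeHomogeneousSeries (hc : ∀ j, 0 < c j) {j : C} (hj : j ∈ s) (a : ℕ) :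
    c j ^ a ≤ (H c s).coeff a := by
  classical
  rw [coeff_completeHomogeneousSeries]
  refine le_of_eq_of_le ?_ (single_le_sum (f := fun f : C → ℕ => ∏ j ∈ s, c j ^ f j)
    (fun f _ => prod_nonneg fun j _ => pow_nonneg (hc j).le _)
    (show Pi.single j a ∈ piAntidiag s a from ?_))
  · rw [prod_eq_single_of_mem j hj fun i _ hi => by rw [Pi.single_eq_of_ne hi, pow_zero],
      Pi.single_eq_same]
  · refine mem_piAntidiag.mpr ⟨(sum_pi_single' j a s).trans (if_pos hj), fun i hi => ?_⟩
    by_contra his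
    exact hi (by rw [Pi.single_apply, if_neg (by rintro rfl; exact his hj)])

theorem hasSum_completeHomogeneousSeries (hc : ∀ j, 0 < c j) {t : ℝ} (ht : 0 < t)
    (h : ∀ j ∈ s, c j * t < 1) :
    HasSum (fun a => (H c s).coeff a * t ^ a) (∏ j ∈ s, (1 - c j * t)⁻¹) := by
  classical
  induction s using Finset.cons_induction with
  | empty =>
    have hterm (a : ℕ) : (H c ∅).coeff a * t ^ a = if a = 0 then 1 else 0 := by
      rcases eq_or_ne a 0 with rfl | ha <;>
        simp [completeHomogeneousSeries, PowerSeries.coeff_one, *]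
    simpa only [hterm, prod_empty] using hasSum_ite_eq 0 (1 : ℝ)
  | cons j s hj ih =>
    have hs := ih fun i hi => h i (mem_cons_of_mem hi)
    have hgeom := hasSum_geometric_of_lt_one (mul_pos (hc j) ht).le (h j (mem_cons_self j s))
    have hterm (a : ℕ) : (H c (cons j s hj)).coeff a * t ^ a =
        ∑ x ∈ antidiagonal a, (c j * t) ^ x.1 * ((H c s).coeff x.2 * t ^ x.2) := by
      rw [completeHomogeneousSeries, prod_cons, ← completeHomogeneousSeries, PowerSeries.coeff_mul,
        sum_mul]
      refine sum_congr rfl fun x hx => ?_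
      rw [PowerSeries.coeff_mk, ← mem_antidiagonal.mp hx]
      ring
    rw [prod_cons, ← hgeom.tsum_eq, ← hs.tsum_eq,
      tsum_mul_tsum_eq_tsum_sum_antidiagonal_of_summable_norm hgeom.summable.norm hs.summable.norm]
    simp only [hterm]
    exact (summable_norm_sum_mul_antidiagonal_of_summable_norm hgeom.summable.norm
      hs.summable.norm).of_norm.hasSum

theorem prod_rpow_mul_exp_entH_le (hc : ∀ j, 0 < c j) {M : C → ℝ} (hM : ∀ j, 0 ≤ M j) {k : ℕ}
    (hsum : ∑ j ∈ s, M j = k) {t S : ℝ} (ht : 0 < t)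
    (hS : HasSum (fun a => (H c s).coeff a * t ^ a) S) :
    (∏ j ∈ s, c j ^ M j * Real.exp (entH (M j))) * t ^ k ≤ S := by
  have hlt (j : C) (hj : j ∈ s) : c j * t < 1 := by
    have hgeom : Summable fun a => (c j * t) ^ a := by
      refine .of_nonneg_of_le (fun a => pow_nonneg (mul_pos (hc j) ht).le a) (fun a => ?_)
        hS.summable
      rw [mul_pow]
      gcongr
      exact pow_le_coeff_completeHomogeneousSeries hc hj a
    exact (le_abs_self _).trans_lt (summable_geometric_iff_norm_lt_one.mp hgeom)
  rw [hS.unique (hasSum_completeHomogeneousSeries hc ht hlt), ← Real.rpow_natCast, ← hsum,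
    Real.rpow_sum_of_pos ht, ← prod_mul_distrib]
  refine prod_le_prod (fun j _ => ?_) fun j hj => ?_
  · have := (hc j).le; positivity
  · calc c j ^ M j * Real.exp (entH (M j)) * t ^ M j
        = (c j * t) ^ M j * Real.exp (entH (M j)) := by
          rw [Real.mul_rpow (hc j).le ht.le]; ring
      _ ≤ (1 - c j * t)⁻¹ := rpow_mul_exp_entH_le (mul_pos (hc j) ht) (hlt j hj) (hM j)

theorem prod_rpow_mul_exp_entH_le_sum_piAntidiag [DecidableEq C] (hc : ∀ j, 0 < c j)
    (hs : s.Nonempty) {M : C → ℝ} (hM : ∀ j, 0 ≤ M j) {k : ℕ} (hsum : ∑ j ∈ s, M j = k) :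
    ∏ j ∈ s, c j ^ M j * Real.exp (entH (M j)) ≤
      (∑ f ∈ piAntidiag s k, ∏ j ∈ s, c j ^ f j) * Real.exp (entH k) := by
  have hpos := coeff_completeHomogeneousSeries_pos hc hs
  rw [← coeff_completeHomogeneousSeries]
  exact le_mul_exp_entH_of_mul_pow_le (b := fun a => (H c s).coeff a) (fun a => (hpos a).le)
    (div_pos (hpos (k + 1)) (hpos k))
    (fun a => mul_pow_le_of_logConcave (T := max a (k + 1)) (fun a _ => hpos a)
      (fun a _ => coeff_completeHomogeneousSeries_logConcave hc hs a)
      (le_max_right a (k + 1)) (le_max_left a (k + 1)))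
    fun t S ht hS => prod_rpow_mul_exp_entH_le hc hM hsum ht hS

end RowBound

section ColumnBound

open Filter Topology

variable {R C : Type*}

/-- Multiplication of the entries in column `w` by `t`. -/
def scaleColumn [DecidableEq C] (c : R → C → ℝ) (w : C) (t : ℝ) : R → C → ℝ :=
  fun i j => c i j * if j = w then t else 1

theorem scaleColumn_pos [DecidableEq C] {c : R → C → ℝ} (hc : ∀ i j, 0 < c i j) (w : C)
    {t : ℝ} (ht : 0 < t) (i : R) (j : C) : 0 < scaleColumn c w t i j := by
  refine mul_pos (hc i j) ?_
  split_ifs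
  exacts [ht, one_pos]

variable [Fintype R] [Fintype C]

theorem tableWeight_scaleColumn [DecidableEq C] (c : R → C → ℝ) (w : C) (t : ℝ) (m : R → C → ℕ) :
    tableWeight (scaleColumn c w t) m = tableWeight c m * t ^ ∑ i, m i w := by
  simp only [tableWeight, scaleColumn, mul_pow, ite_pow, one_pow, prod_mul_distrib, prod_ite_eq',
    mem_univ, if_true, ← prod_pow_eq_pow_sum]

variable [DecidableEq R] [DecidableEq C]

-- The indicator is replaced by a Gaussian, which is positive and Lorentzian, so that the transfer
-- sums along the segment form a positive log-concave sequence; the Gaussian is then sharpened.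
theorem le_transferSum_agreeIndicator_mul_exp_entH {c : R → C → ℝ} (hc : ∀ i j, 0 < c i j)
    (E : Finset (R × C)) (L : Finset (R ⊕ C)) (x g : R ⊕ C → ℕ) (u v : R ⊕ C) {k T : ℕ}
    (hk : k < T) {K : ℝ}
    (hK : ∀ t, 0 < t → K * t ^ k ≤ ∑ a ∈ range (T + 1),
      transferSum c E (agreeIndicator L g) (x + Pi.single u (T - a) + Pi.single v a) * t ^ a) :
    K ≤ transferSum c E (agreeIndicator L g) (x + Pi.single u (T - k) + Pi.single v k) *
      Real.exp (entH k) := by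
  let p (κ : ℝ) : (R ⊕ C → ℕ) → ℝ := gaussian (fun l => if l ∈ L then κ else 0) g
  have hp (κ : ℝ) (y : R ⊕ C → ℕ) : 0 < p κ y := gaussian_pos _ g y
  have hlim : Tendsto
      (fun κ => transferSum c E (p κ) (x + Pi.single u (T - k) + Pi.single v k)) atTop
      (𝓝 (transferSum c E (agreeIndicator L g) (x + Pi.single u (T - k) + Pi.single v k))) := by
    simp only [transferSum]
    exact tendsto_finsetSum _ fun m _ => (tendsto_gaussian_atTop L g _).const_mul _
  refine ge_of_tendsto (hlim.mul_const _) ?_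
  filter_upwards [eventually_ge_atTop 0] with κ hκ
  have hL : IsLorentzianFun (p κ) :=
    isLorentzianFun_gaussian (fun l => by split_ifs <;> simp [hκ]) g
  refine (isLorentzianFun_transferSum hc (hp κ) hL E).le_segment_mul_exp_entH
    (transferSum_pos hc (hp κ) E) x u v hk fun t ht => (hK t ht).trans ?_
  refine sum_le_sum fun a _ => mul_le_mul_of_nonneg_right ?_ (pow_nonneg ht.le a)
  exact transferSum_mono hc (agreeIndicator_le_gaussian L κ g) E _

/-- The tables of natural numbers with row sums `α` and with column sums `β` in the columns in
`F`. -/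
def marginTables (α : R → ℕ) (β : C → ℕ) (F : Finset C) : Finset (R → C → ℕ) :=
  {m ∈ Fintype.piFinset fun i => piAntidiag univ (α i) | ∀ j ∈ F, ∑ i, m i j = β j}

theorem mem_marginTables {α : R → ℕ} {β : C → ℕ} {F : Finset C} {m : R → C → ℕ} :
    m ∈ marginTables α β F ↔ (∀ i, ∑ j, m i j = α i) ∧ ∀ j ∈ F, ∑ i, m i j = β j := by
  simp [marginTables]

/-- The weighted number of tables with row sums `α` and with column sums `β` in the columns in
`F`. -/
noncomputable def tableSum (α : R → ℕ) (β : C → ℕ) (F : Finset C) (c : R → C → ℝ) : ℝ :=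
  ∑ m ∈ marginTables α β F, tableWeight c m

variable {α : R → ℕ} {β : C → ℕ} {F : Finset C} {w : C}

theorem filter_marginTables (hw : w ∉ F) (a : ℕ) :
    {m ∈ marginTables α β F | ∑ i, m i w = a} =
      marginTables α (Function.update β w a) (insert w F) := by
  ext m
  have hF : (∀ j ∈ F, ∑ i, m i j = Function.update β w a j) ↔ ∀ j ∈ F, ∑ i, m i j = β j :=
    forall₂_congr fun j hj => by rw [Function.update_of_ne (ne_of_mem_of_not_mem hj hw)]
  rw [mem_filter, mem_marginTables, mem_marginTables, forall_mem_insert, hF, Function.update_self]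
  tauto

theorem tableSum_scaleColumn (hw : w ∉ F) (c : R → C → ℝ) (t : ℝ) {T : ℕ} (hT : ∑ i, α i ≤ T) :
    tableSum α β F (scaleColumn c w t) =
      ∑ a ∈ range (T + 1), tableSum α (Function.update β w a) (insert w F) c * t ^ a := by
  have hmaps : ∀ m ∈ marginTables α β F, ∑ i, m i w ∈ range (T + 1) := fun m hm => by
    refine mem_range_succ_iff.mpr (le_trans (sum_le_sum fun i _ => ?_) hT)
    rw [← (mem_marginTables.mp hm).1 i]
    exact single_le_sum (f := m i) (fun _ _ => Nat.zero_le _) (mem_univ w)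
  rw [tableSum, ← sum_fiberwise_of_maps_to hmaps]
  refine sum_congr rfl fun a _ => ?_
  rw [filter_marginTables hw, tableSum, sum_mul]
  refine sum_congr rfl fun m hm => ?_
  rw [tableWeight_scaleColumn, (mem_marginTables.mp hm).2 w (mem_insert_self w F),
    Function.update_self]

theorem tableSum_update_eq_transferSum {j₀ : C} (hw : w ∉ F) (hj₀ : j₀ ∉ insert w F)
    (c : R → C → ℝ) {a T : ℕ} (ha : a ≤ T) :
    tableSum α (Function.update β w a) (insert w F) c =
      transferSum c univ
        (agreeIndicator (univ.disjSum (insert w F)) (Sum.elim 0 (Function.update β w T)))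
        (Sum.elim α 0 + Pi.single (Sum.inr w) (T - a) + Pi.single (Sum.inr j₀) a) := by
  simp only [transferSum, agreeIndicator, mul_ite, mul_one, mul_zero, ← sum_filter, tableSum]
  refine sum_congr (ext fun m => ?_) fun _ _ => rfl
  let g : R ⊕ C → ℕ := Sum.elim α 0 + Pi.single (Sum.inr w) (T - a) + Pi.single (Sum.inr j₀) a
  have hrow (i : R) : g (Sum.inl i) = α i := by simp [g]
  have hcol : ∀ j ∈ insert w F, (g (Sum.inr j) + ∑ i, m i j = Function.update β w T j ↔
      ∑ i, m i j = Function.update β w a j) := fun j hj => by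
    have hj₀j : j ≠ j₀ := ne_of_mem_of_not_mem hj hj₀
    have hg : g (Sum.inr j) = (Pi.single w (T - a) : C → ℕ) j := by
      simp [g, hj₀j, Pi.single_apply]
    rw [hg]
    rcases eq_or_ne j w with rfl | hjw
    · simp only [Pi.single_eq_same, Function.update_self]
      omega
    · simp only [Pi.single_eq_of_ne hjw, Function.update_of_ne hjw, zero_add]
  have htransfer : (∀ l ∈ univ.disjSum (insert w F),
      transfer m g l = (Sum.elim 0 (Function.update β w T) : R ⊕ C → ℕ) l) ↔
      (∀ i, g (Sum.inl i) - ∑ j, m i j = 0) ∧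
        ∀ j ∈ insert w F, g (Sum.inr j) + ∑ i, m i j = Function.update β w T j := by
    refine ⟨fun h => ⟨fun i => h (Sum.inl i) (inl_mem_disjSum.mpr (mem_univ i)),
      fun j hj => h (Sum.inr j) (inr_mem_disjSum.mpr hj)⟩, fun ⟨hR, hC⟩ => ?_⟩
    rintro (i | j) hl
    exacts [hR i, hC j (inr_mem_disjSum.mp hl)]
  have hsum_row : (∀ i, ∑ j, m i j = α i) ↔
      (∀ i, ∑ j, m i j ≤ g (Sum.inl i)) ∧ ∀ i, g (Sum.inl i) - ∑ j, m i j = 0 := by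
    rw [← forall_and]
    exact forall_congr' fun i => by rw [hrow]; omega
  have hsupp : ∀ i j, (i, j) ∉ (univ : Finset (R × C)) → m i j = 0 :=
    fun i j h => absurd (mem_univ _) h
  rw [mem_marginTables, mem_filter, mem_boundedTables, htransfer, forall₂_congr hcol, hsum_row,
    and_iff_right hsupp, and_assoc]
  rfl

theorem le_tableSum_insert_mul_exp_entH {j₀ : C} (hw : w ∉ F) (hj₀ : j₀ ∉ insert w F)
    {c : R → C → ℝ} (hc : ∀ i j, 0 < c i j) {K : ℝ}
    (hK : ∀ t, 0 < t → K * t ^ β w ≤ tableSum α β F (scaleColumn c w t)) :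
    K ≤ tableSum α β (insert w F) c * Real.exp (entH (β w)) := by
  have hT : β w < ∑ i, α i + β w + 1 := by omega
  have hsum := tableSum_update_eq_transferSum (α := α) (β := β) hw hj₀ c hT.le
  rw [Function.update_eq_self] at hsum
  rw [hsum]
  refine le_transferSum_agreeIndicator_mul_exp_entH hc _ _ _ _ _ _ hT fun t ht => ?_
  refine (hK t ht).trans_eq ?_
  rw [tableSum_scaleColumn hw c t (T := ∑ i, α i + β w + 1) (by omega)]
  refine sum_congr rfl fun a ha => ?_
  rw [tableSum_update_eq_transferSum hw hj₀ c (mem_range_succ_iff.mp ha)]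

end ColumnBound

section TableBound

open Filter Topology

variable {R C : Type*} [Fintype R] [Fintype C]

theorem tableWeight_indicator (S : R → C → Prop) [∀ i j, Decidable (S i j)] (m : R → C → ℕ) :
    tableWeight (fun i j => if S i j then 1 else 0) m =
      if ∀ i j, ¬ S i j → m i j = 0 then 1 else 0 := by
  split_ifs with h
  · refine prod_eq_one fun i _ => prod_eq_one fun j _ => ?_
    by_cases hS : S i j
    · simp only [if_pos hS, one_pow]
    · rw [h i j hS, pow_zero]
  · push Not at h
    obtain ⟨i, j, hS, hm⟩ := h
    refine prod_eq_zero (mem_univ i) (prod_eq_zero (mem_univ j) ?_)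
    simp only [if_neg hS, zero_pow hm]

theorem prod_scaleColumn_rpow [DecidableEq C] {c : R → C → ℝ} (hc : ∀ i j, 0 < c i j) (w : C)
    {t : ℝ} (ht : 0 < t) (M : R → C → ℝ) :
    ∏ i, ∏ j, scaleColumn c w t i j ^ M i j = (∏ i, ∏ j, c i j ^ M i j) * t ^ ∑ i, M i w := by
  rw [Real.rpow_sum_of_pos ht, ← prod_mul_distrib]
  refine prod_congr rfl fun i _ => ?_
  have hentry (j : C) :
      scaleColumn c w t i j ^ M i j = c i j ^ M i j * if j = w then t ^ M i j else 1 := by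
    rw [scaleColumn]
    split_ifs with hj
    · exact Real.mul_rpow (hc i j).le ht.le
    · rw [mul_one, mul_one]
  rw [prod_congr rfl fun j _ => hentry j, prod_mul_distrib, prod_ite_eq', if_pos (mem_univ w)]

variable [DecidableEq R] [DecidableEq C] {α : R → ℕ} {β : C → ℕ} {M : R → C → ℝ}

theorem tableSum_empty (α : R → ℕ) (β : C → ℕ) (c : R → C → ℝ) :
    tableSum α β ∅ c = ∏ i, ∑ f ∈ piAntidiag univ (α i), ∏ j, c i j ^ f j := by
  simp only [tableSum, marginTables, tableWeight, notMem_empty, false_imp_iff, implies_true,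
    filter_true, prod_univ_sum]

theorem prod_rpow_mul_exp_sum_entH_le_tableSum (hM : ∀ i j, 0 ≤ M i j)
    (hα : ∀ i, ∑ j, M i j = α i) (hβ : ∀ j, ∑ i, M i j = β j) {F : Finset C} {j₀ : C}
    (hj₀ : j₀ ∉ F) {c : R → C → ℝ} (hc : ∀ i j, 0 < c i j) :
    (∏ i, ∏ j, c i j ^ M i j) * Real.exp (∑ i, ∑ j, entH (M i j)) ≤
      tableSum α β F c * Real.exp (∑ i, entH (α i) + ∑ j ∈ F, entH (β j)) := by
  induction F using Finset.induction_on generalizing c with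
  | empty =>
    simp only [tableSum_empty, sum_empty, add_zero, Real.exp_sum, ← prod_mul_distrib]
    refine prod_le_prod (fun i _ => prod_nonneg fun j _ => ?_) fun i _ =>
      prod_rpow_mul_exp_entH_le_sum_piAntidiag (hc i) ⟨j₀, mem_univ j₀⟩ (hM i) (hα i)
    exact mul_nonneg (Real.rpow_nonneg (hc i j).le _) (Real.exp_pos _).le
  | insert w F hw ih =>
    set D := Real.exp (∑ i, entH (α i) + ∑ j ∈ F, entH (β j))
    have hcol := le_tableSum_insert_mul_exp_entH (α := α) (β := β) hw hj₀ hc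
      (K := (∏ i, ∏ j, c i j ^ M i j) * Real.exp (∑ i, ∑ j, entH (M i j)) / D) fun t ht => ?_
    · rw [sum_insert hw, add_left_comm, Real.exp_add, ← mul_assoc]
      exact (div_le_iff₀ (Real.exp_pos _)).mp hcol
    · have hscale := ih (fun h => hj₀ (mem_insert_of_mem h)) (scaleColumn_pos hc w ht)
      rw [prod_scaleColumn_rpow hc w ht, hβ w, Real.rpow_natCast] at hscale
      rw [div_mul_eq_mul_div, div_le_iff₀ (Real.exp_pos _), mul_right_comm]
      exact hscale

theorem marginTables_erase_univ (h : ∑ i, α i = ∑ j, β j) (j₀ : C) :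
    marginTables α β (univ.erase j₀) = marginTables α β univ := by
  ext m
  simp only [mem_marginTables, mem_univ, forall_true_left, mem_erase, and_true]
  refine and_congr_right fun hα => ⟨fun hβ j => ?_, fun hβ j _ => hβ j⟩
  rcases eq_or_ne j j₀ with rfl | hj
  · have hsum : ∑ j, ∑ i, m i j = ∑ j, β j := by
      rw [sum_comm, ← h]
      exact sum_congr rfl fun i _ => hα i
    rw [← add_sum_erase _ _ (mem_univ j), ← add_sum_erase _ β (mem_univ j)] at hsum
    rwa [sum_congr rfl fun j hj => hβ j (ne_of_mem_erase hj), add_left_inj] at hsum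
  · exact hβ j hj

/-- The tables of natural numbers with row sums `α` and column sums `β` whose nonzero entries are
at positions satisfying `S`. -/
def supportedTables (α : R → ℕ) (β : C → ℕ) (S : R → C → Prop) [∀ i j, Decidable (S i j)] :
    Finset (R → C → ℕ) :=
  {m ∈ marginTables α β univ | ∀ i j, ¬ S i j → m i j = 0}

variable {S : R → C → Prop} [∀ i j, Decidable (S i j)]

theorem mem_supportedTables {m : R → C → ℕ} :
    m ∈ supportedTables α β S ↔
      (∀ i, ∑ j, m i j = α i) ∧ (∀ j, ∑ i, m i j = β j) ∧ ∀ i j, ¬ S i j → m i j = 0 := by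
  simp only [supportedTables, mem_filter, mem_marginTables, mem_univ, forall_true_left, and_assoc]

theorem tableSum_indicator (h : ∑ i, α i = ∑ j, β j) (S : R → C → Prop)
    [∀ i j, Decidable (S i j)] (j₀ : C) :
    tableSum α β (univ.erase j₀) (fun i j => if S i j then 1 else 0) =
      #(supportedTables α β S) := by
  simp only [tableSum, marginTables_erase_univ h, tableWeight_indicator, sum_boole]
  rfl

-- Positions outside `S` are allowed with a small weight `d`, and then `d` tends to `0`.
theorem exp_sum_entH_le_card_supportedTables (hM : ∀ i j, 0 ≤ M i j)
    (hα : ∀ i, ∑ j, M i j = α i) (hβ : ∀ j, ∑ i, M i j = β j)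
    (hS : ∀ i j, ¬ S i j → M i j = 0) (j₀ : C) :
    Real.exp (∑ i, ∑ j, entH (M i j)) ≤ #(supportedTables α β S) *
      Real.exp (∑ i, entH (α i) + ∑ j ∈ univ.erase j₀, entH (β j)) := by
  let c (d : ℝ) : R → C → ℝ := fun i j => if S i j then 1 else d
  have hsum : ∑ i, α i = ∑ j, β j := by
    have : ∑ i, (α i : ℝ) = ∑ j, (β j : ℝ) := by
      simp only [← hα, ← hβ]
      exact sum_comm
    exact_mod_cast this
  have hle (d : ℝ) (hd : 0 < d) : Real.exp (∑ i, ∑ j, entH (M i j)) ≤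
      tableSum α β (univ.erase j₀) (c d) *
        Real.exp (∑ i, entH (α i) + ∑ j ∈ univ.erase j₀, entH (β j)) := by
    have hc (i : R) (j : C) : 0 < c d i j := by
      dsimp only [c]; split_ifs <;> [exact one_pos; exact hd]
    have hprod : ∏ i, ∏ j, c d i j ^ M i j = 1 := by
      refine prod_eq_one fun i _ => prod_eq_one fun j _ => ?_
      by_cases h : S i j
      · simp only [c, if_pos h, Real.one_rpow]
      · rw [hS i j h, Real.rpow_zero]
    simpa only [hprod, one_mul] using
      prod_rpow_mul_exp_sum_entH_le_tableSum hM hα hβ (notMem_erase j₀ univ) hc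
  have hcont : Continuous fun d => tableSum α β (univ.erase j₀) (c d) := by
    refine continuous_finsetSum _ fun m _ => continuous_finsetProd _ fun i _ =>
      continuous_finsetProd _ fun j _ => Continuous.pow ?_ _
    dsimp only [c]
    split_ifs <;> fun_prop
  rw [← tableSum_indicator hsum S j₀]
  have hlim := ((hcont.tendsto 0).mono_left (nhdsWithin_le_nhds (s := Set.Ioi 0))).mul_const
    (Real.exp (∑ i, entH (α i) + ∑ j ∈ univ.erase j₀, entH (β j)))
  exact ge_of_tendsto hlim (eventually_nhdsWithin_of_forall hle)

end TableBound

section StrictUpper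

variable {ι A : Type*} [LinearOrder ι]

/-- The strictly upper triangular part of a square table: it turns a table with diagonal entries
into a family of flows on the edges `u < v`. -/
def strictUpper [Zero A] (Y : ι → ι → A) : ι → ι → A := fun u v => if u < v then Y u v else 0

theorem strictUpper_add_diag [AddZeroClass A] {Y : ι → ι → A} (hY : ∀ u v, ¬ u ≤ v → Y u v = 0)
    (u v : ι) : strictUpper Y u v + (if u = v then Y u v else 0) = Y u v := by
  rw [strictUpper]
  rcases lt_trichotomy u v with h | rfl | h
  · rw [if_pos h, if_neg h.ne, add_zero]
  · rw [if_neg (lt_irrefl u), if_pos rfl, zero_add]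
  · rw [if_neg h.not_gt, if_neg h.ne', hY u v h.not_ge, add_zero]

variable [Fintype ι]

theorem sum_strictUpper_row_add [AddCommMonoid A] {Y : ι → ι → A}
    (hY : ∀ u v, ¬ u ≤ v → Y u v = 0) (u : ι) :
    ∑ v, strictUpper Y u v + Y u u = ∑ v, Y u v := by
  rw [← sum_congr rfl fun v _ => strictUpper_add_diag hY u v, sum_add_distrib, sum_ite_eq,
    if_pos (mem_univ u)]

theorem sum_strictUpper_col_add [AddCommMonoid A] {Y : ι → ι → A}
    (hY : ∀ u v, ¬ u ≤ v → Y u v = 0) (v : ι) :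
    ∑ u, strictUpper Y u v + Y v v = ∑ u, Y u v := by
  rw [← sum_congr rfl fun u _ => strictUpper_add_diag hY u v, sum_add_distrib, sum_ite_eq',
    if_pos (mem_univ v)]

theorem eq_of_strictUpper_eq [AddCancelCommMonoid A] {Y Y' : ι → ι → A}
    (hY : ∀ u v, ¬ u ≤ v → Y u v = 0) (hY' : ∀ u v, ¬ u ≤ v → Y' u v = 0)
    (hcol : ∀ v, ∑ u, Y u v = ∑ u, Y' u v) (h : strictUpper Y = strictUpper Y') : Y = Y' := by
  have hdiag (v : ι) : Y v v = Y' v v := by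
    have hv := hcol v
    rwa [← sum_strictUpper_col_add hY, ← sum_strictUpper_col_add hY', h, add_right_inj] at hv
  ext u v
  rw [← strictUpper_add_diag hY, ← strictUpper_add_diag hY', h]
  split_ifs with huv
  · rw [huv, hdiag]
  · rfl

end StrictUpper

section FlowTable

variable {n : ℕ} {N : Fin (n + 1) → ℝ} {f : Fin (n + 1) → Fin (n + 1) → ℝ}

/-- The summands of the second kind in the flow entropy, for every vertex `v`: the total netflow of
the vertices before `v` minus the flow into `v`, that is, the flow on the edges passing over
`v`. -/
noncomputable def slack (N : Fin (n + 1) → ℝ) (f : Fin (n + 1) → Fin (n + 1) → ℝ)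
    (v : Fin (n + 1)) : ℝ :=
  ∑ l, if l < v then N l - f l v else 0

theorem Iic_castSucc_eq_Iio_succ (j : Fin n) : Iic j.castSucc = Iio j.succ := by
  ext l
  simp only [mem_Iic, mem_Iio, Fin.le_castSucc_iff]

theorem netflow_eq (hf : f ∈ FlowPolytope n N) (u : Fin (n + 1)) :
    N u = ∑ w, f u w - ∑ k, f k u := by
  rw [← hf.2.2 u]
  congr 1 <;> refine sum_congr rfl fun w _ => ite_eq_left_iff.mpr fun h => (hf.2.1 _ _ h).symm

theorem inflow_add_slack (hf : f ∈ FlowPolytope n N) (v : Fin (n + 1)) :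
    ∑ k, f k v + slack N f v = ∑ l ∈ Iio v, N l := by
  rw [slack, ← sum_add_distrib, ← filter_gt_eq_Iio, sum_filter]
  refine sum_congr rfl fun l _ => ?_
  split_ifs with h
  · ring
  · rw [hf.2.1 l v h, add_zero]

theorem outflow_add_slack (hf : f ∈ FlowPolytope n N) (u : Fin (n + 1)) :
    ∑ w, f u w + slack N f u = ∑ l ∈ Iic u, N l := by
  have hin := inflow_add_slack hf u
  have hnet := netflow_eq hf u
  rw [← Iio_insert, sum_insert (by simp)]
  linarith

-- Both sides are the flow across the cut separating the vertices before `v` from the others.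
theorem sum_Iio_netflow (hf : f ∈ FlowPolytope n N) (v : Fin (n + 1)) :
    ∑ l ∈ Iio v, N l = ∑ l ∈ Iio v, ∑ w ∈ Ici v, f l w := by
  have hcompl : (Iio v)ᶜ = Ici v := by ext; simp
  have hin : ∑ l ∈ Iio v, ∑ k, f k l = ∑ l ∈ Iio v, ∑ w ∈ Iio v, f l w := by
    rw [sum_comm]
    refine (sum_subset (subset_univ _) fun k _ hk => sum_eq_zero fun l hl => hf.2.1 k l ?_).symm
    exact fun hkl => hk (mem_Iio.mpr (hkl.trans (mem_Iio.mp hl)))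
  rw [sum_congr rfl fun l _ => netflow_eq hf l, sum_sub_distrib, hin, ← sum_sub_distrib]
  refine sum_congr rfl fun l _ => ?_
  rw [← sum_add_sum_compl (Iio v), hcompl, add_sub_cancel_left]

theorem slack_eq_sum (hf : f ∈ FlowPolytope n N) (v : Fin (n + 1)) :
    slack N f v = ∑ l ∈ Iio v, ∑ w ∈ Ioi v, f l w := by
  have hin : ∑ k, f k v = ∑ k ∈ Iio v, f k v :=
    (sum_subset (subset_univ _) fun k _ hk => hf.2.1 k v (by simpa using hk)).symm
  have hcut := sum_Iio_netflow hf v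
  rw [← inflow_add_slack hf, hin] at hcut
  have hsplit (l : Fin (n + 1)) : ∑ w ∈ Ici v, f l w = f l v + ∑ w ∈ Ioi v, f l w := by
    rw [← Ioi_insert, sum_insert (by simp)]
  simp only [hsplit, sum_add_distrib] at hcut
  linarith

theorem slack_nonneg (hf : f ∈ FlowPolytope n N) (v : Fin (n + 1)) : 0 ≤ slack N f v := by
  rw [slack_eq_sum hf]
  exact sum_nonneg fun l hl => sum_nonneg fun w hw =>
    hf.1 l w ((mem_Iio.mp hl).trans (mem_Ioi.mp hw))

theorem slack_zero (N : Fin (n + 1) → ℝ) (f : Fin (n + 1) → Fin (n + 1) → ℝ) :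
    slack N f 0 = 0 := by
  simp [slack]

theorem slack_last (hf : f ∈ FlowPolytope n N) : slack N f (Fin.last n) = 0 := by
  rw [slack_eq_sum hf, ← Fin.top_eq_last, Ioi_top]
  simp

/-- The flow `f` completed by the slacks on the diagonal, which makes the row sums and the column
sums consecutive partial sums of the netflow. -/
noncomputable def completedFlow (N : Fin (n + 1) → ℝ) (f : Fin (n + 1) → Fin (n + 1) → ℝ)
    (u v : Fin (n + 1)) : ℝ :=
  f u v + if u = v then slack N f u else 0

theorem completedFlow_nonneg (hf : f ∈ FlowPolytope n N) (u v : Fin (n + 1)) :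
    0 ≤ completedFlow N f u v := by
  have hfuv : 0 ≤ f u v := by
    by_cases h : u < v
    exacts [hf.1 u v h, (hf.2.1 u v h).ge]
  refine add_nonneg hfuv ?_
  split_ifs
  exacts [slack_nonneg hf u, le_rfl]

theorem completedFlow_eq_zero (hf : f ∈ FlowPolytope n N) {u v : Fin (n + 1)} (h : ¬ u ≤ v) :
    completedFlow N f u v = 0 := by
  rw [completedFlow, hf.2.1 u v fun huv => h huv.le, if_neg fun huv => h huv.le, add_zero]

theorem sum_completedFlow_row (hf : f ∈ FlowPolytope n N) (u : Fin (n + 1)) :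
    ∑ v, completedFlow N f u v = ∑ l ∈ Iic u, N l := by
  simp only [completedFlow, sum_add_distrib, sum_ite_eq, mem_univ, if_true, outflow_add_slack hf]

theorem sum_completedFlow_col (hf : f ∈ FlowPolytope n N) (v : Fin (n + 1)) :
    ∑ u, completedFlow N f u v = ∑ l ∈ Iio v, N l := by
  simp only [completedFlow, sum_add_distrib, sum_ite_eq', mem_univ, if_true, inflow_add_slack hf]

theorem completedFlow_zero_right (hf : f ∈ FlowPolytope n N) (u : Fin (n + 1)) :
    completedFlow N f u 0 = 0 := by
  rcases eq_or_ne u 0 with rfl | hu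
  · rw [completedFlow, hf.2.1 0 0 (lt_irrefl _), if_pos rfl, slack_zero, add_zero]
  · exact completedFlow_eq_zero hf (Fin.pos_of_ne_zero hu).not_ge

theorem completedFlow_last_left (hf : f ∈ FlowPolytope n N) (v : Fin (n + 1)) :
    completedFlow N f (Fin.last n) v = 0 := by
  rcases eq_or_ne v (Fin.last n) with rfl | hv
  · rw [completedFlow, hf.2.1 _ _ (lt_irrefl _), if_pos rfl, slack_last hf, add_zero]
  · exact completedFlow_eq_zero hf (Fin.lt_last_iff_ne_last.mpr hv).not_ge

/-- The completed flow without its zero row and its zero column. -/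
noncomputable def flowTable (N : Fin (n + 1) → ℝ) (f : Fin (n + 1) → Fin (n + 1) → ℝ)
    (i j : Fin n) : ℝ :=
  completedFlow N f i.castSucc j.succ

theorem sum_flowTable_row (hf : f ∈ FlowPolytope n N) (i : Fin n) :
    ∑ j, flowTable N f i j = ∑ l ∈ Iic i.castSucc, N l := by
  rw [← sum_completedFlow_row hf, Fin.sum_univ_succ, completedFlow_zero_right hf, zero_add]
  rfl

theorem sum_flowTable_col (hf : f ∈ FlowPolytope n N) (j : Fin n) :
    ∑ i, flowTable N f i j = ∑ l ∈ Iic j.castSucc, N l := by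
  rw [Iic_castSucc_eq_Iio_succ, ← sum_completedFlow_col hf, Fin.sum_univ_castSucc,
    completedFlow_last_left hf, add_zero]
  rfl

theorem entH_zero : entH 0 = 0 := by simp [entH]

theorem sum_entH_completedFlow (hf : f ∈ FlowPolytope n N) :
    ∑ u, ∑ v, entH (completedFlow N f u v) = flowEntropy n N f := by
  have hentry (u v : Fin (n + 1)) : entH (completedFlow N f u v) =
      (if u < v then entH (f u v) else 0) + if u = v then entH (slack N f u) else 0 := by
    rw [completedFlow]
    rcases lt_trichotomy u v with h | rfl | h
    · simp only [if_pos h, if_neg h.ne, add_zero]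
    · simp only [if_neg (lt_irrefl u), if_pos, hf.2.1 u u (lt_irrefl u), zero_add]
    · simp only [if_neg h.not_gt, if_neg h.ne', hf.2.1 u v h.not_gt, add_zero, entH_zero]
  have hslack (v : Fin (n + 1)) : entH (slack N f v) =
      if 0 < (v : ℕ) ∧ (v : ℕ) < n then entH (slack N f v) else 0 := by
    refine (ite_eq_left_iff.mpr fun h => ?_).symm
    obtain rfl | rfl : v = 0 ∨ v = Fin.last n := by
      simp only [Fin.ext_iff, Fin.val_zero, Fin.val_last]
      omega
    · rw [slack_zero, entH_zero]
    · rw [slack_last hf, entH_zero]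
  simp only [hentry, sum_add_distrib, sum_ite_eq, mem_univ, if_true]
  rw [flowEntropy, sum_congr rfl fun v _ => hslack v]
  rfl

theorem sum_entH_flowTable (hf : f ∈ FlowPolytope n N) :
    ∑ i, ∑ j, entH (flowTable N f i j) = flowEntropy n N f := by
  rw [← sum_entH_completedFlow hf, Fin.sum_univ_castSucc]
  simp only [Fin.sum_univ_succ (n := n) fun _ => entH _, completedFlow_last_left hf,
    completedFlow_zero_right hf, entH_zero, zero_add, sum_const_zero, add_zero, flowTable]

end FlowTable

section IntFlows

variable {n : ℕ} {N : Fin (n + 1) → ℤ}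

theorem sPartial_eq_sum_Iic (N : Fin (n + 1) → ℤ) (u : Fin (n + 1)) :
    sPartial n N u = ∑ l ∈ Iic u, N l := by
  rw [← filter_ge_eq_Iic, sum_filter]
  rfl

theorem IsIntFlow.natCast_mem_flowPolytope {g : Fin (n + 1) → Fin (n + 1) → ℕ}
    (hg : IsIntFlow n N g) : (fun u v => (g u v : ℝ)) ∈ FlowPolytope n fun u => (N u : ℝ) := by
  refine ⟨fun u v _ => Nat.cast_nonneg _, fun u v h => Nat.cast_eq_zero.mpr (hg.1 u v h),
    fun u => ?_⟩
  have hnet := congrArg (fun z : ℤ => (z : ℝ)) (hg.2 u)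
  push_cast at hnet
  exact hnet

theorem IsIntFlow.apply_le_sPartial {g : Fin (n + 1) → Fin (n + 1) → ℕ} (hg : IsIntFlow n N g)
    (u v : Fin (n + 1)) : (g u v : ℤ) ≤ sPartial n N u := by
  have hpoly := hg.natCast_mem_flowPolytope
  have hle : (g u v : ℝ) ≤ ∑ l ∈ Iic u, (N l : ℝ) := by
    rw [← outflow_add_slack hpoly]
    have := single_le_sum (f := fun w => (g u w : ℝ)) (fun _ _ => Nat.cast_nonneg _) (mem_univ v)
    linarith [slack_nonneg hpoly u]
  rw [sPartial_eq_sum_Iic]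
  exact_mod_cast hle

theorem finite_setOf_isIntFlow (N : Fin (n + 1) → ℤ) : {g | IsIntFlow n N g}.Finite :=
  (Set.finite_Icc (0 : Fin (n + 1) → Fin (n + 1) → ℕ) fun u _ => (sPartial n N u).toNat).subset
    fun _ hg => ⟨fun _ _ => Nat.zero_le _, fun u v =>
      Nat.cast_le.mp ((hg.apply_le_sPartial u v).trans (Int.self_le_toNat _))⟩

theorem isIntFlow_strictUpper {Y : Fin (n + 1) → Fin (n + 1) → ℕ}
    (hY : ∀ u v, ¬ u ≤ v → Y u v = 0)
    (hnet : ∀ u, (∑ v, Y u v : ℕ) - (∑ w, Y w u : ℕ) = N u) :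
    IsIntFlow n N (strictUpper Y) := by
  refine ⟨fun u v h => if_neg h, fun u => ?_⟩
  have hite (v w : Fin (n + 1)) : (if v < w then ((strictUpper Y v w : ℕ) : ℤ) else 0) =
      ((strictUpper Y v w : ℕ) : ℤ) :=
    ite_eq_left_iff.mpr fun h => (Nat.cast_eq_zero.mpr (if_neg h)).symm
  rw [← hnet, ← sum_strictUpper_row_add hY, ← sum_strictUpper_col_add hY]
  simp only [hite]
  push_cast
  ring

/-- The table `m` bordered by a zero column on the left and by a zero row at the bottom. -/
def borderTable (m : Fin n → Fin n → ℕ) : Fin (n + 1) → Fin (n + 1) → ℕ :=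
  Fin.snoc (fun i => Fin.cons 0 (m i)) 0

theorem borderTable_castSucc_succ (m : Fin n → Fin n → ℕ) (i j : Fin n) :
    borderTable m i.castSucc j.succ = m i j := by
  simp [borderTable]

theorem borderTable_zero_right (m : Fin n → Fin n → ℕ) (u : Fin (n + 1)) :
    borderTable m u 0 = 0 := by
  cases u using Fin.lastCases <;> simp [borderTable]

theorem borderTable_last_left (m : Fin n → Fin n → ℕ) (v : Fin (n + 1)) :
    borderTable m (Fin.last n) v = 0 := by
  simp [borderTable]

theorem borderTable_injective : Function.Injective (borderTable (n := n)) := fun m m' h => by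
  ext i j
  rw [← borderTable_castSucc_succ m, h, borderTable_castSucc_succ]

variable {α : Fin n → ℕ} {m : Fin n → Fin n → ℕ}

theorem borderTable_eq_zero_of_not_le (hm : m ∈ supportedTables α α fun i j => i.castSucc ≤ j.succ)
    {u v : Fin (n + 1)} (h : ¬ u ≤ v) : borderTable m u v = 0 := by
  cases u using Fin.lastCases with
  | last => exact borderTable_last_left m v
  | cast i =>
    cases v using Fin.cases with
    | zero => exact borderTable_zero_right m _
    | succ j => rw [borderTable_castSucc_succ, (mem_supportedTables.mp hm).2.2 i j h]

theorem sum_borderTable_row (hm : m ∈ supportedTables α α fun i j => i.castSucc ≤ j.succ)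
    (hα : ∀ i : Fin n, (α i : ℤ) = sPartial n N i) (hsum : ∑ u, N u = 0) (u : Fin (n + 1)) :
    ((∑ v, borderTable m u v : ℕ) : ℤ) = ∑ l ∈ Iic u, N l := by
  cases u using Fin.lastCases with
  | last =>
    simp only [borderTable_last_left, sum_const_zero, Nat.cast_zero]
    rw [← Fin.top_eq_last, Iic_top, hsum]
  | cast i =>
    simp only [Fin.sum_univ_succ, borderTable_zero_right, borderTable_castSucc_succ, zero_add,
      (mem_supportedTables.mp hm).1, hα, ← sPartial_eq_sum_Iic, Fin.val_castSucc]

theorem sum_borderTable_col (hm : m ∈ supportedTables α α fun i j => i.castSucc ≤ j.succ)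
    (hα : ∀ i : Fin n, (α i : ℤ) = sPartial n N i) (v : Fin (n + 1)) :
    ((∑ u, borderTable m u v : ℕ) : ℤ) = ∑ l ∈ Iio v, N l := by
  cases v using Fin.cases with
  | zero =>
    simp only [borderTable_zero_right, sum_const_zero, Nat.cast_zero]
    rw [Iio_eq_empty.mpr fun _ _ => Fin.zero_le _, sum_empty]
  | succ j =>
    simp only [Fin.sum_univ_castSucc, borderTable_last_left, borderTable_castSucc_succ, add_zero,
      (mem_supportedTables.mp hm).2.1, hα, ← Iic_castSucc_eq_Iio_succ,
      ← sPartial_eq_sum_Iic, Fin.val_castSucc]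

theorem isIntFlow_strictUpper_borderTable
    (hm : m ∈ supportedTables α α fun i j => i.castSucc ≤ j.succ)
    (hα : ∀ i : Fin n, (α i : ℤ) = sPartial n N i) (hsum : ∑ u, N u = 0) :
    IsIntFlow n N (strictUpper (borderTable m)) := by
  refine isIntFlow_strictUpper (fun u v => borderTable_eq_zero_of_not_le hm) fun u => ?_
  rw [sum_borderTable_row hm hα hsum, sum_borderTable_col hm hα, ← Iio_insert,
    sum_insert (by simp), add_sub_cancel_right]

theorem card_supportedTables_le_Kn (hα : ∀ i : Fin n, (α i : ℤ) = sPartial n N i)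
    (hsum : ∑ u, N u = 0) :
    #(supportedTables α α fun i j : Fin n => i.castSucc ≤ j.succ) ≤ Kn n N := by
  change _ ≤ {g | IsIntFlow n N g}.ncard
  rw [← Set.ncard_coe_finset]
  refine Set.ncard_le_ncard_of_injOn (fun m => strictUpper (borderTable m))
    (fun m hm => isIntFlow_strictUpper_borderTable hm hα hsum) (fun m hm m' hm' h => ?_)
    (finite_setOf_isIntFlow N)
  refine borderTable_injective (eq_of_strictUpper_eq (fun u v => borderTable_eq_zero_of_not_le hm)
    (fun u v => borderTable_eq_zero_of_not_le hm') (fun v => ?_) h)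
  exact_mod_cast (sum_borderTable_col hm hα v).trans (sum_borderTable_col hm' hα v).symm

theorem exp_flowEntropy_le {f : Fin (n + 1) → Fin (n + 1) → ℝ} (hsum : ∑ u, N u = 0)
    (hf : f ∈ FlowPolytope n fun u => (N u : ℝ)) (k : Fin n) :
    Real.exp (flowEntropy n (fun u => (N u : ℝ)) f) ≤ Kn n N *
      Real.exp (2 * ∑ i : Fin n, entH (sPartial n N i) - entH (sPartial n N k)) := by
  have hpartial (i : Fin n) : ∑ l ∈ Iic i.castSucc, (N l : ℝ) = (sPartial n N i : ℤ) := by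
    rw [← Fin.val_castSucc, sPartial_eq_sum_Iic, Int.cast_sum]
  have hM (i j : Fin n) : 0 ≤ flowTable (fun u => (N u : ℝ)) f i j := completedFlow_nonneg hf _ _
  obtain ⟨α, hα⟩ : ∃ α : Fin n → ℕ, ∀ i, (α i : ℤ) = sPartial n N i :=
    ⟨fun i => (sPartial n N i).toNat, fun i => Int.toNat_of_nonneg <| by
      have := sum_nonneg fun j (_ : j ∈ univ) => hM i j
      rw [sum_flowTable_row hf, hpartial] at this
      exact_mod_cast this⟩
  have hαR (i : Fin n) : (α i : ℝ) = (sPartial n N i : ℤ) := by rw [← hα, Int.cast_natCast]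
  have hbound := exp_sum_entH_le_card_supportedTables (S := fun i j => i.castSucc ≤ j.succ) hM
    (fun i => (sum_flowTable_row hf i).trans ((hpartial i).trans (hαR i).symm))
    (fun j => (sum_flowTable_col hf j).trans ((hpartial j).trans (hαR j).symm))
    (fun i j h => completedFlow_eq_zero hf h) k
  rw [sum_entH_flowTable hf, sum_erase_eq_sub (mem_univ k), ← add_sub_assoc, ← two_mul] at hbound
  simp only [hαR] at hbound
  exact hbound.trans (mul_le_mul_of_nonneg_right
    (Nat.cast_le.mpr (card_supportedTables_le_Kn hα hsum)) (Real.exp_pos _).le)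

end IntFlows

/-- **Theorem.** For any point `f` of the flow polytope `F_n(N)`,
`K_n(N) ≥ (max_{0 ≤ k ≤ n−1} e^{h(s_k)}) · e^{−2 ∑_k h(s_k)} · e^{H(f)}`. -/
theorem kostant_lower_bound_of_flow (n : ℕ) (hn : 1 ≤ n) (N : Fin (n + 1) → ℤ)
    (hsum : ∑ i, N i = 0)
    (f : Fin (n + 1) → Fin (n + 1) → ℝ)
    (hf : f ∈ FlowPolytope n fun i => (N i : ℝ)) :
    (Kn n N : ℝ) ≥
      (⨆ k : Fin n, Real.exp (entH ((sPartial n N k : ℤ) : ℝ))) *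
        Real.exp (-2 * ∑ k ∈ Finset.range n, entH ((sPartial n N k : ℤ) : ℝ)) *
        Real.exp (flowEntropy n (fun i => (N i : ℝ)) f) := by
  have : Nonempty (Fin n) := ⟨⟨0, hn⟩⟩
  rw [ge_iff_le, mul_assoc, Real.iSup_mul_of_nonneg (by positivity), sum_range]
  refine ciSup_le fun k => ?_
  calc Real.exp (entH (sPartial n N k)) * (Real.exp (-2 * ∑ i : Fin n, entH (sPartial n N i)) *
          Real.exp (flowEntropy n (fun i => (N i : ℝ)) f))
      ≤ Real.exp (entH (sPartial n N k)) * (Real.exp (-2 * ∑ i : Fin n, entH (sPartial n N i)) *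
          (Kn n N * Real.exp (2 * ∑ i : Fin n, entH (sPartial n N i) -
            entH (sPartial n N k)))) := by
        gcongr
        exact exp_flowEntropy_le hsum hf k
    _ = Kn n N * Real.exp (entH (sPartial n N k) + -2 * ∑ i : Fin n, entH (sPartial n N i) +
          (2 * ∑ i : Fin n, entH (sPartial n N i) - entH (sPartial n N k))) := by
        rw [Real.exp_add, Real.exp_add]; ring
    _ = Kn n N := by
        rw [show ∀ a b : ℝ, a + -2 * b + (2 * b - a) = 0 by intros; ring, Real.exp_zero, mul_one]
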